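/- arXiv:1504.04396 — 8 statements merged into one kernel-verified Lean document; each statement's English description precedes it below -/
import Mathlib

section
/- For each k ∈ {0,1}, the power series Σ_{m≥0} c_{k,m} τ^m converges absolutely for every complex number τ with |τ| < 4. -/
/-- Fix a positive irrational real `λ` and `k ∈ {0,1}`, and set
`c_{k,m} = [∏_{l=0}^{m−1} (−λ−(k/2+l))³] / [Γ(1+m+k/2+λ)·(2m+k)!]`.  Then the power series
`Σ_{m≥0} c_{k,m} τ^m` converges absolutely for every complex `τ` with `|τ| < 4`. -/
theorem stmt_1 (lam : ℝ) (hpos : 0 < lam) (hirr : Irrational lam)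
    (k : ℕ) (hk : k ≤ 1)
    (c : ℕ → ℝ)
    (hc : ∀ m : ℕ, c m =
      (∏ l ∈ Finset.range m, (-lam - ((k : ℝ) / 2 + (l : ℝ))) ^ 3) /
        (Real.Gamma (1 + (m : ℝ) + (k : ℝ) / 2 + lam) * ((2 * m + k).factorial : ℝ)))
    (τ : ℂ) (hτ : ‖τ‖ < 4) :
    Summable (fun m : ℕ => ‖(c m : ℂ) * τ ^ m‖) := by
  obtain ⟨a, ha⟩ : ∃ a : ℝ, a = lam + (k : ℝ) / 2 := ⟨_, rfl⟩
  have ha0 : 0 < a := by rw [ha]; positivity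
  have hrec : ∀ m : ℕ, c (m + 1) = c m * (-((a + 1 * m) / ((1 + a) + 1 * m) *
      ((a + 1 * m) / ((k + 1) + 2 * m)) * ((a + 1 * m) / ((k + 2) + 2 * m)))) := by
    intro m
    have h1 : (0 : ℝ) < 1 + a + m := by positivity
    have hG := Real.Gamma_pos_of_pos h1
    have e1 : 1 + (m : ℝ) + (k : ℝ) / 2 + lam = 1 + a + m := by rw [ha]; ring
    have e2 : 1 + ((m + 1 : ℕ) : ℝ) + (k : ℝ) / 2 + lam = (1 + a + m) + 1 := by
      rw [ha]; push_cast; ring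
    have e3 : 2 * (m + 1) + k = (2 * m + k) + 1 + 1 := by ring
    have e4 : -lam - ((k : ℝ) / 2 + (m : ℝ)) = -(a + m) := by rw [ha]; ring
    rw [hc, hc, e1, e2, e3, Real.Gamma_add_one h1.ne', Finset.prod_range_succ, e4,
      Nat.factorial_succ, Nat.factorial_succ]
    have hf : (0 : ℝ) < ((2 * m + k).factorial : ℝ) := by positivity
    generalize (∏ l ∈ Finset.range m, (-lam - ((k : ℝ) / 2 + (l : ℝ))) ^ 3) = P
    generalize Real.Gamma (1 + a + m) = G at *
    push_cast
    generalize ((2 * m + k).factorial : ℝ) = F at *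
    have h2 : (0 : ℝ) < k + 1 + 2 * m := by positivity
    have h3 : (0 : ℝ) < k + 2 + 2 * m := by positivity
    have h4 : (2 * (m : ℝ) + k + 1 + 1) = k + 2 + 2 * m := by ring
    have h5 : (2 * (m : ℝ) + k + 1) = k + 1 + 2 * m := by ring
    rw [h4, h5, one_mul]
    field_simp
  have hlim := (((tendsto_add_mul_div_add_mul_atTop_nhds a (1 + a) 1 (one_ne_zero)).mul
    (tendsto_add_mul_div_add_mul_atTop_nhds a ((k : ℝ) + 1) 1 (two_ne_zero))).mul
    (tendsto_add_mul_div_add_mul_atTop_nhds a ((k : ℝ) + 2) 1 (two_ne_zero))).mul_const ‖τ‖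
  have hlt : (1 / 1 * (1 / 2) * (1 / 2) * ‖τ‖ : ℝ) < 1 := by linarith
  obtain ⟨r, hr1, hr2⟩ := exists_between hlt
  refine summable_of_ratio_norm_eventually_le hr2 ?_
  filter_upwards [hlim.eventually (gt_mem_nhds hr1)] with m hm
  rw [norm_norm, norm_norm, hrec m, norm_mul, norm_mul, pow_succ, norm_mul,
    Complex.norm_real, Complex.norm_real, norm_mul, norm_neg]
  have hnn : (0 : ℝ) ≤ (a + 1 * m) / ((1 + a) + 1 * m) *
      ((a + 1 * m) / ((k + 1) + 2 * m)) * ((a + 1 * m) / ((k + 2) + 2 * m)) := by positivity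
  rw [Real.norm_of_nonneg hnn]
  have h0 : 0 ≤ ‖c m‖ * ‖τ ^ m‖ := by positivity
  calc _ = _ * (‖c m‖ * ‖τ ^ m‖) := by rw [mul_mul_mul_comm, mul_comm]
    _ ≤ _ := mul_le_mul_of_nonneg_right hm.le h0
end

section
/- For each k ∈ {0,1}, the function I_k^{reg}(τ) = Σ_{m≥0} c_{k,m} τ^{m+k/2+λ} (real τ ∈ (0,4), with τ^s = exp(s log τ) for complex s) is infinitely differentiable on (0,4) and satisfies the regularized Picard–Fuchs equation [τ·θ³ + (2θ−2λ)(2θ−2λ−1)θ] I_k^{reg}(τ) = 0 for all τ ∈ (0,4), where θ is the Euler operator θf(τ) = τ·f′(τ) and the displayed operator is the indicated composition of first-order operators. -/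
/-- The Euler operator `θ f (τ) = τ · f′(τ)` acting on complex-valued functions of a real
variable. -/
noncomputable def eulerOp (f : ℝ → ℂ) : ℝ → ℂ := fun τ => (τ : ℂ) * deriv f τ

open Filter Topology

noncomputable def pfS (c : ℕ → ℝ) (s : ℝ) (j : ℕ) (τ : ℝ) : ℝ :=
  ∑' m : ℕ, c m * ((m : ℝ) + s) ^ j * τ ^ ((m : ℝ) + s)

lemma pf_lim (a d b : ℝ) (hb : b ≠ 0) :
    Tendsto (fun m : ℕ => ((m : ℝ) + a) / (b * m + d)) atTop (𝓝 (1 / b)) := by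
  have := tendsto_add_mul_div_add_mul_atTop_nhds (𝕜 := ℝ) a d 1 hb
  refine this.congr fun m => ?_
  rw [one_mul, add_comm a, add_comm d]

lemma pf_summable (c : ℕ → ℝ) (s : ℝ) (hs : 0 < s) (k : ℕ) (hc0 : ∀ m, c m ≠ 0)
    (hrec : ∀ m : ℕ, c (m + 1) * ((2 * m + k + 2) * (2 * m + k + 1) * ((m : ℝ) + 1 + s))
      = - c m * ((m : ℝ) + s) ^ 3) (j : ℕ) (r : ℝ) (hr : 0 < r) (hr4 : r < 4) :
    Summable (fun m : ℕ => |c m| * ((m : ℝ) + s) ^ j * r ^ ((m : ℝ) + s)) := by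
  have hp : ∀ m : ℕ, 0 < (m : ℝ) + s := fun m => by positivity
  refine summable_of_ratio_test_tendsto_lt_one (l := r / 4) (by linarith) ?_ ?_
  · refine Eventually.of_forall fun m => ?_
    have := abs_pos.2 (hc0 m)
    have := hp m
    positivity
  · have h1 := pf_lim s (1 + s) 1 one_ne_zero
    have h1' := pf_lim (1 + s) s 1 one_ne_zero
    have h2 := pf_lim s (k + 2) 2 two_ne_zero
    have h3 := pf_lim s (k + 1) 2 two_ne_zero
    have h := (((h1.mul h2).mul h3).mul (h1'.pow j)).mul_const r
    have e : (1 / 1 * (1 / 2) * (1 / 2) * (1 / 1) ^ j * r : ℝ) = r / 4 := by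
      rw [div_one, one_pow]; ring
    rw [e] at h
    refine h.congr fun m => ?_
    have hm := hp m
    have hm1 : 0 < (m : ℝ) + 1 + s := by positivity
    have hA : (0 : ℝ) < 2 * m + k + 2 := by positivity
    have hB : (0 : ℝ) < 2 * m + k + 1 := by positivity
    have hcm := abs_pos.2 (hc0 m)
    have hc1 : |c (m + 1)| = |c m| * ((m : ℝ) + s) ^ 3 /
        ((2 * m + k + 2) * (2 * m + k + 1) * ((m : ℝ) + 1 + s)) := by
      have := congrArg abs (hrec m)
      rw [abs_mul (c (m + 1)), abs_mul (-c m), abs_neg,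
        abs_of_pos (a := (2 * (m : ℝ) + k + 2) * (2 * m + k + 1) * ((m : ℝ) + 1 + s))
          (by positivity), abs_of_pos (a := ((m : ℝ) + s) ^ 3) (by positivity)] at this
      rw [eq_div_iff (by positivity), this]
    have hpow : r ^ (((m + 1 : ℕ) : ℝ) + s) = r ^ ((m : ℝ) + s) * r := by
      rw [← Real.rpow_add_one hr.ne']; congr 1; push_cast; ring
    have hrp : 0 < r ^ ((m : ℝ) + s) := Real.rpow_pos_of_pos hr _
    rw [Real.norm_of_nonneg (by positivity), Real.norm_of_nonneg (by positivity), hpow, hc1]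
    push_cast
    rw [div_pow]
    have e1 : (1 * (m : ℝ) + (1 + s)) = m + 1 + s := by ring
    have e2 : ((m : ℝ) + (1 + s)) = m + 1 + s := by ring
    have e3 : (2 * (m : ℝ) + (k + 2)) = 2 * m + k + 2 := by ring
    have e4 : (2 * (m : ℝ) + (k + 1)) = 2 * m + k + 1 := by ring
    rw [e1, e2, e3, e4, one_mul]
    field_simp

lemma pf_hasDerivAt (c : ℕ → ℝ) (s : ℝ) (hs : 0 < s)
    (H : ∀ (j : ℕ) (r : ℝ), 0 < r → r < 4 →
      Summable (fun m : ℕ => |c m| * ((m : ℝ) + s) ^ j * r ^ ((m : ℝ) + s)))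
    (j : ℕ) (τ : ℝ) (hτ : τ ∈ Set.Ioo (0 : ℝ) 4) :
    HasDerivAt (pfS c s j) (pfS c s (j + 1) τ / τ) τ := by
  obtain ⟨h0, h4⟩ := hτ
  obtain ⟨r, hr1, hr4⟩ := exists_between h4
  have hr0 : 0 < r := h0.trans hr1
  have key := hasDerivAt_tsum_of_isPreconnected
    (u := fun m : ℕ => (|c m| * ((m : ℝ) + s) ^ (j + 1) * r ^ ((m : ℝ) + s)) / (τ / 2))
    (g := fun (m : ℕ) (x : ℝ) => c m * ((m : ℝ) + s) ^ j * x ^ ((m : ℝ) + s))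
    (g' := fun (m : ℕ) (x : ℝ) => (c m * ((m : ℝ) + s) ^ (j + 1) * x ^ ((m : ℝ) + s)) / x)
    (t := Set.Ioo (τ / 2) r) (y₀ := τ) (y := τ)
    ((H (j + 1) r hr0 hr4).div_const _) isOpen_Ioo isPreconnected_Ioo ?_ ?_
    ⟨by linarith, hr1⟩ ?_ ⟨by linarith, hr1⟩
  · rw [pfS, ← tsum_div_const]
    exact key
  · intro m x hx
    have hx0 : 0 < x := by linarith [hx.1]
    have := (Real.hasDerivAt_rpow_const (x := x) (p := (m : ℝ) + s) (Or.inl hx0.ne')).const_mul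
      (c m * ((m : ℝ) + s) ^ j)
    refine this.congr_deriv ?_
    rw [Real.rpow_sub_one hx0.ne']
    ring
  · intro m x hx
    have hx0 : 0 < x := by linarith [hx.1]
    have hm : 0 < (m : ℝ) + s := by positivity
    rw [norm_div, norm_mul, norm_mul, Real.norm_eq_abs, Real.norm_of_nonneg (by positivity),
      Real.norm_of_nonneg (by positivity), Real.norm_of_nonneg hx0.le]
    have := Real.rpow_le_rpow hx0.le hx.2.le hm.le
    have hh := hx.1.le
    gcongr
  · refine Summable.of_norm ((H j τ h0 h4).congr fun m => ?_)
    have hm : 0 < (m : ℝ) + s := by positivity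
    rw [norm_mul, norm_mul, Real.norm_eq_abs, Real.norm_of_nonneg (by positivity),
      Real.norm_of_nonneg (by positivity)]

lemma pf_contDiff (c : ℕ → ℝ) (s : ℝ)
    (H : ∀ (j : ℕ) (τ : ℝ), τ ∈ Set.Ioo (0 : ℝ) 4 →
      HasDerivAt (pfS c s j) (pfS c s (j + 1) τ / τ) τ) (n : ℕ) :
    ∀ j, ContDiffOn ℝ n (pfS c s j) (Set.Ioo 0 4) := by
  induction n with
  | zero =>
    intro j
    rw [Nat.cast_zero, contDiffOn_zero]
    exact fun x hx => (H j x hx).continuousAt.continuousWithinAt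
  | succ n ih =>
    intro j
    rw [Nat.cast_succ, contDiffOn_succ_iff_deriv_of_isOpen isOpen_Ioo]
    refine ⟨fun x hx => (H j x hx).differentiableAt.differentiableWithinAt, by simp, ?_⟩
    refine ((ih (j + 1)).div contDiffOn_id fun x hx => hx.1.ne').congr fun x hx => ?_
    exact (H j x hx).deriv

lemma pf_euler (c : ℕ → ℝ) (s : ℝ)
    (H : ∀ (j : ℕ) (τ : ℝ), τ ∈ Set.Ioo (0 : ℝ) 4 →
      HasDerivAt (pfS c s j) (pfS c s (j + 1) τ / τ) τ) (j : ℕ) (f : ℝ → ℂ)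
    (hf : ∀ τ ∈ Set.Ioo (0 : ℝ) 4, f τ = (pfS c s j τ : ℂ)) :
    ∀ τ ∈ Set.Ioo (0 : ℝ) 4, HasDerivAt f ((pfS c s (j + 1) τ : ℂ) / τ) τ ∧
      eulerOp f τ = (pfS c s (j + 1) τ : ℂ) := by
  intro τ hτ
  have h : HasDerivAt f ((pfS c s (j + 1) τ : ℂ) / τ) τ := by
    have := (H j τ hτ).ofReal_comp
    push_cast at this
    exact this.congr_of_eventuallyEq
      (Filter.eventuallyEq_of_mem (isOpen_Ioo.mem_nhds hτ) hf)
  refine ⟨h, ?_⟩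
  have : (τ : ℂ) ≠ 0 := by exact_mod_cast hτ.1.ne'
  rw [eulerOp, h.deriv]
  field_simp

lemma pf_ode (c : ℕ → ℝ) (lam : ℝ) (hl : 0 < lam) (k : ℕ) (hk : k ≤ 1)
    (hrec : ∀ m : ℕ, c (m + 1) * ((2 * m + k + 2) * (2 * m + k + 1) *
      ((m : ℝ) + 1 + ((k : ℝ) / 2 + lam))) = - c m * ((m : ℝ) + ((k : ℝ) / 2 + lam)) ^ 3)
    (τ : ℝ) (hτ : 0 < τ)
    (H : ∀ j : ℕ, Summable (fun m : ℕ => c m * ((m : ℝ) + ((k : ℝ) / 2 + lam)) ^ j *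
      τ ^ ((m : ℝ) + ((k : ℝ) / 2 + lam)))) :
    τ * pfS c (k / 2 + lam) 3 τ + (4 * pfS c (k / 2 + lam) 3 τ
      - (8 * lam + 2) * pfS c (k / 2 + lam) 2 τ
      + 2 * lam * (2 * lam + 1) * pfS c (k / 2 + lam) 1 τ) = 0 := by
  have h3 := (H 3).hasSum
  have hb := ((h3.mul_left 4).sub ((H 2).hasSum.mul_left (8 * lam + 2))).add
    ((H 1).hasSum.mul_left (2 * lam * (2 * lam + 1)))
  have h0 := hb.tsum_eq
  rw [hb.summable.tsum_eq_zero_add] at h0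
  unfold pfS
  rw [← h0, ← tsum_mul_left]
  have hz : (k : ℝ) * (k - 1) = 0 := by
    interval_cases k <;> simp
  rw [add_left_comm, ← Summable.tsum_add (h3.mul_left τ).summable
    ((summable_nat_add_iff 1).2 hb.summable)]
  convert add_zero (0 : ℝ) using 2
  · simp only [Nat.cast_zero, zero_add]
    linear_combination (c 0 * ((k : ℝ) / 2 + lam) * τ ^ ((k : ℝ) / 2 + lam)) * hz
  · rw [← tsum_zero (α := ℝ) (β := ℕ)]
    congr 1
    ext m
    have hpow : τ ^ (((m + 1 : ℕ) : ℝ) + ((k : ℝ) / 2 + lam))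
        = τ ^ ((m : ℝ) + ((k : ℝ) / 2 + lam)) * τ := by
      rw [← Real.rpow_add_one hτ.ne']; congr 1; push_cast; ring
    rw [hpow]
    push_cast
    linear_combination (τ ^ ((m : ℝ) + ((k : ℝ) / 2 + lam)) * τ) * hrec m

/-- Fix a positive irrational real `λ` and `k ∈ {0,1}`, and set
`c_{k,m} = [∏_{l=0}^{m−1} (−λ−(k/2+l))³] / [Γ(1+m+k/2+λ)·(2m+k)!]`.  The component
`I_k^{reg}(τ) = Σ_{m≥0} c_{k,m} τ^{m+k/2+λ}` of the regularized `I`-function of `[ℂ³/ℤ₂]`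
(for real `τ ∈ (0,4)`, with `τ^s = exp(s log τ)`) is infinitely differentiable on `(0,4)`
and satisfies the regularized Picard–Fuchs equation
`[τ·θ³ + (2θ−2λ)(2θ−2λ−1)θ] I_k^{reg}(τ) = 0` there, where `θ` is the Euler operator. -/
theorem stmt_2 (lam : ℝ) (hpos : 0 < lam) (hirr : Irrational lam)
    (k : ℕ) (hk : k ≤ 1)
    (c : ℕ → ℝ)
    (hc : ∀ m : ℕ, c m =
      (∏ l ∈ Finset.range m, (-lam - ((k : ℝ) / 2 + (l : ℝ))) ^ 3) /
        (Real.Gamma (1 + (m : ℝ) + (k : ℝ) / 2 + lam) * ((2 * m + k).factorial : ℝ)))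
    (I : ℝ → ℂ)
    (hI : ∀ τ ∈ Set.Ioo (0 : ℝ) 4,
      I τ = ∑' m : ℕ, (c m : ℂ) * (τ : ℂ) ^ ((m : ℂ) + (k : ℂ) / 2 + (lam : ℂ))) :
    ContDiffOn ℝ (⊤ : ℕ∞) I (Set.Ioo 0 4) ∧
    ∀ τ ∈ Set.Ioo (0 : ℝ) 4,
      (τ : ℂ) * eulerOp (eulerOp (eulerOp I)) τ +
        (2 * eulerOp (fun σ => 2 * eulerOp (eulerOp I) σ - (2 * (lam : ℂ) + 1) * eulerOp I σ) τ
          - 2 * (lam : ℂ) *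
            (2 * eulerOp (eulerOp I) τ - (2 * (lam : ℂ) + 1) * eulerOp I τ)) = 0 := by
  have hs : 0 < (k : ℝ) / 2 + lam := by positivity
  have hG : ∀ m : ℕ, 0 < Real.Gamma (1 + (m : ℝ) + (k : ℝ) / 2 + lam) := fun m =>
    Real.Gamma_pos_of_pos (by positivity)
  have hc0 : ∀ m, c m ≠ 0 := by
    intro m
    rw [hc]
    refine div_ne_zero (Finset.prod_ne_zero_iff.2 fun l _ => pow_ne_zero _ ?_)
      (mul_ne_zero (hG m).ne' (by positivity))
    have : (0 : ℝ) ≤ (k : ℝ) / 2 + l := by positivity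
    linarith
  have hrec : ∀ m : ℕ, c (m + 1) * ((2 * m + k + 2) * (2 * m + k + 1) *
      ((m : ℝ) + 1 + ((k : ℝ) / 2 + lam))) = - c m * ((m : ℝ) + ((k : ℝ) / 2 + lam)) ^ 3 := by
    intro m
    have hp : 0 < 1 + (m : ℝ) + (k : ℝ) / 2 + lam := by positivity
    have hg : Real.Gamma (1 + ((m + 1 : ℕ) : ℝ) + (k : ℝ) / 2 + lam)
        = (1 + (m : ℝ) + (k : ℝ) / 2 + lam) * Real.Gamma (1 + (m : ℝ) + (k : ℝ) / 2 + lam) := by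
      rw [← Real.Gamma_add_one hp.ne']; congr 1; push_cast; ring
    have hf : ((2 * (m + 1) + k).factorial : ℝ)
        = (2 * m + k + 2) * (2 * m + k + 1) * ((2 * m + k).factorial : ℝ) := by
      have : 2 * (m + 1) + k = (2 * m + k + 1) + 1 := by ring
      rw [this, Nat.factorial_succ, Nat.factorial_succ]
      push_cast; ring
    have := (hG m).ne'
    have hA : (2 * (m : ℝ) + k + 2) ≠ 0 := by positivity
    have hB : (2 * (m : ℝ) + k + 1) ≠ 0 := by positivity
    have hF : ((2 * m + k).factorial : ℝ) ≠ 0 := by positivity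
    rw [hc, hc, hg, hf, Finset.prod_range_succ]
    have e : ((m : ℝ) + 1 + ((k : ℝ) / 2 + lam)) = 1 + (m : ℝ) + (k : ℝ) / 2 + lam := by ring
    rw [e]
    generalize Real.Gamma (1 + (m : ℝ) + (k : ℝ) / 2 + lam) = G at *
    generalize 1 + (m : ℝ) + (k : ℝ) / 2 + lam = P at *
    generalize ((2 * m + k).factorial : ℝ) = F at *
    generalize (2 * (m : ℝ) + k + 2) = A at *
    generalize (2 * (m : ℝ) + k + 1) = B at *
    have hP := hp.ne'
    rw [div_mul_eq_mul_div, div_eq_iff (by positivity), ← neg_div, div_mul_eq_mul_div,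
      div_mul_eq_mul_div, eq_div_iff (by positivity)]
    ring
  have hsum := pf_summable c _ hs k hc0 hrec
  have H := pf_hasDerivAt c _ hs hsum
  have hI0 : ∀ τ ∈ Set.Ioo (0 : ℝ) 4, I τ = (pfS c ((k : ℝ) / 2 + lam) 0 τ : ℂ) := by
    intro τ hτ
    rw [hI τ hτ, pfS, Complex.ofReal_tsum]
    congr 1
    ext m
    rw [pow_zero, mul_one, Complex.ofReal_mul, Complex.ofReal_cpow hτ.1.le]
    push_cast
    rw [add_assoc]
  have E1 := pf_euler c _ H 0 I hI0
  have E2 := pf_euler c _ H 1 (eulerOp I) fun τ hτ => (E1 τ hτ).2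
  have E3 := pf_euler c _ H 2 (eulerOp (eulerOp I)) fun τ hτ => (E2 τ hτ).2
  constructor
  · have : ContDiffOn ℝ (⊤ : ℕ∞) (pfS c ((k : ℝ) / 2 + lam) 0) (Set.Ioo 0 4) :=
      contDiffOn_infty.2 fun n => pf_contDiff c _ H n 0
    exact (Complex.ofRealCLM.contDiff.comp_contDiffOn this).congr hI0
  · intro τ hτ
    have hsm : ∀ j : ℕ, Summable (fun m : ℕ => c m * ((m : ℝ) + ((k : ℝ) / 2 + lam)) ^ j *
        τ ^ ((m : ℝ) + ((k : ℝ) / 2 + lam))) := by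
      intro j
      have hτ0 := hτ.1
      refine Summable.of_norm ((hsum j τ hτ.1 hτ.2).congr fun m => ?_)
      have hm : 0 < (m : ℝ) + ((k : ℝ) / 2 + lam) := by positivity
      rw [norm_mul, norm_mul, Real.norm_eq_abs, Real.norm_of_nonneg (by positivity),
        Real.norm_of_nonneg (by positivity)]
    have ode := pf_ode c lam hpos k hk hrec τ hτ.1 hsm
    have odeC := congrArg (fun x : ℝ => (x : ℂ)) ode
    push_cast at odeC
    have hd : eulerOp (fun σ => 2 * eulerOp (eulerOp I) σ - (2 * (lam : ℂ) + 1) * eulerOp I σ) τ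
        = 2 * eulerOp (eulerOp (eulerOp I)) τ - (2 * (lam : ℂ) + 1) * eulerOp (eulerOp I) τ := by
      have := (((E3 τ hτ).1.const_mul 2).sub ((E2 τ hτ).1.const_mul (2 * (lam : ℂ) + 1))).deriv
      have e3 := (E3 τ hτ).1.deriv
      have e2 := (E2 τ hτ).1.deriv
      conv_lhs => rw [eulerOp]
      conv_rhs => rw [eulerOp, e3]
      conv_rhs => enter [2, 2]; rw [eulerOp, e2]
      refine (congrArg (fun z => (τ : ℂ) * z) this).trans ?_
      ring
    rw [hd, (E3 τ hτ).2, (E2 τ hτ).2, (E1 τ hτ).2]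
    simp only [zero_add, Nat.reduceAdd]
    linear_combination odeC
end

section
/- For each k ∈ {0,1}, there exists a holomorphic function G_k on the slit plane C ∖ (−∞,0] such that G_k(τ) = Σ_{m≥0} c_{k,m} τ^{m+k/2+λ} (principal-branch complex powers) for every τ ∈ C ∖ (−∞,0] with |τ| < 4. (That is, the regularized I-function of [C³/Z₂] can be analytically continued to the region |arg τ| < π.) -/
def UU : Set ℂ := {z | 1 - z ∈ Complex.slitPlane}

lemma UU_open : IsOpen UU :=
  Complex.isOpen_slitPlane.preimage (by fun_prop : Continuous fun z : ℂ => 1 - z)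

lemma UU_star {z : ℂ} (hz : z ∈ UU) {t : ℝ} (h0 : 0 ≤ t) (h1 : t ≤ 1) : (t : ℂ) * z ∈ UU := by
  simp only [UU, Set.mem_ofPred_eq, Complex.mem_slitPlane_iff] at *
  simp at *
  rcases eq_or_lt_of_le h0 with h | h
  · left; subst h; simp
  rcases hz with hz | hz
  · left; nlinarith
  · right; exact ⟨h.ne', hz⟩

/-- sequences whose generating function continues to the slit plane -/
def SS (q : ℕ → ℂ) : Prop :=
  ∃ F : ℂ → ℂ, DifferentiableOn ℂ F UU ∧ ∀ z : ℂ, ‖z‖ < 1 → HasSum (fun m => q m * z ^ m) (F z)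

lemma ball_UU {z : ℂ} (hz : ‖z‖ < 1) : z ∈ UU := by
  simp only [UU, Set.mem_ofPred_eq, Complex.mem_slitPlane_iff]
  left
  have := Complex.re_le_norm z
  simp; linarith

lemma SS_one : SS (fun _ => 1) := by
  refine ⟨fun z => (1 - z)⁻¹, ?_, ?_⟩
  · intro z hz
    have : (1 - z) ≠ 0 := Complex.slitPlane_ne_zero hz
    exact (DifferentiableAt.inv (by fun_prop) this).differentiableWithinAt
  · intro z hz
    simpa using hasSum_geometric_of_norm_lt_one hz

lemma SS_poly {q : ℕ → ℂ} (h : SS q) (β : ℂ) : SS (fun m => ((m : ℂ) + β) * q m) := by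
  obtain ⟨F, hF, hs⟩ := h
  refine ⟨fun z => z * deriv F z + β * F z, ?_, ?_⟩
  · exact (differentiableOn_id.mul (hF.deriv UU_open)).add (hF.const_mul β)
  · intro z hz
    obtain ⟨r, hzr, hr1⟩ := exists_between hz
    have hr0 : 0 ≤ r := (norm_nonneg z).trans hzr.le
    have hsum : Summable (fun m => ‖q m * (r : ℂ) ^ m‖) :=
      (hs (r : ℂ) (by simpa [abs_of_nonneg hr0] using hr1)).summable.norm
    have hd := Complex.hasSum_deriv_of_summable_norm (F := fun m z => q m * z ^ m)
      (U := Metric.ball (0:ℂ) r) (z := z) hsum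
      (fun i => by fun_prop) Metric.isOpen_ball
      (fun i w hw => by
        have hw : ‖w‖ < r := by simpa using hw
        rw [norm_mul, norm_mul, norm_pow, norm_pow, Complex.norm_real, Real.norm_of_nonneg hr0]
        gcongr) (by simpa using hzr)
    have he : deriv (fun w => ∑' i, q i * w ^ i) z = deriv F z := by
      apply Filter.EventuallyEq.deriv_eq
      filter_upwards [Metric.isOpen_ball.mem_nhds (show z ∈ Metric.ball (0:ℂ) 1 by simpa using hz)]
        with w hw
      exact (hs w (by simpa using hw)).tsum_eq
    rw [he] at hd
    have := (hd.mul_left z).add ((hs z hz).mul_left β)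
    refine this.congr_fun ?_ |> id
    intro m
    simp only [deriv_const_mul_field', deriv_pow_field]
    rcases m with _ | m
    · simp
    · simp [pow_succ]; ring

open MeasureTheory in
lemma SS_moment {q : ℕ → ℂ} (h : SS q) (w : ℝ → ℂ) (hw : IntervalIntegrable w volume 0 1) :
    SS (fun m => (∫ t in (0:ℝ)..1, w t * (t:ℂ) ^ m) * q m) := by
  obtain ⟨F, hF, hs⟩ := h
  have hwm : AEStronglyMeasurable w (volume.restrict (Set.uIoc 0 1)) := by
    rw [Set.uIoc_of_le zero_le_one]; exact hw.1.aestronglyMeasurable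
  have hcont : ∀ f : ℂ → ℂ, ContinuousOn f UU → ∀ z ∈ UU,
      ContinuousOn (fun t : ℝ => f (t * z)) (Set.Icc 0 1) := by
    intro f hf z hz
    exact hf.comp (by fun_prop) (fun t ht => UU_star hz ht.1 ht.2)
  have hmeas : ∀ f : ℂ → ℂ, ContinuousOn f UU → ∀ z ∈ UU,
      AEStronglyMeasurable (fun t : ℝ => f (t * z)) (volume.restrict (Set.uIoc 0 1)) := by
    intro f hf z hz
    rw [Set.uIoc_of_le zero_le_one]
    exact ((hcont f hf z hz).mono Set.Ioc_subset_Icc_self).aestronglyMeasurable measurableSet_Ioc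
  have hF' := hF.deriv UU_open
  refine ⟨fun z => ∫ t in (0:ℝ)..1, w t * F (t * z), ?_, ?_⟩
  · intro z hz
    obtain ⟨ε, hε, hball⟩ := Metric.nhds_basis_closedBall.mem_iff.1 (UU_open.mem_nhds hz)
    have hK : IsCompact ((Set.Icc (0:ℝ) 1) ×ˢ (Metric.closedBall z ε)) :=
      isCompact_Icc.prod (isCompact_closedBall z ε)
    have hc : ContinuousOn (fun p : ℝ × ℂ => (p.1 : ℂ) * deriv F (p.1 * p.2))
        ((Set.Icc (0:ℝ) 1) ×ˢ (Metric.closedBall z ε)) := by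
      apply ContinuousOn.mul (by fun_prop)
      exact hF'.continuousOn.comp (by fun_prop)
        (fun p hp => UU_star (hball hp.2) hp.1.1 hp.1.2)
    obtain ⟨M, hM⟩ := hK.exists_bound_of_continuousOn hc
    have key := intervalIntegral.hasDerivAt_integral_of_dominated_loc_of_deriv_le
      (μ := volume) (a := 0) (b := 1) (𝕜 := ℂ)
      (F := fun z (t:ℝ) => w t * F (t * z)) (F' := fun z (t:ℝ) => w t * (t * deriv F (t * z)))
      (x₀ := z) (s := Metric.ball z ε) (bound := fun t => ‖w t‖ * M)
      (Metric.ball_mem_nhds z hε) ?_ ?_ ?_ ?_ ?_ ?_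
    · exact key.2.differentiableAt.differentiableWithinAt
    · filter_upwards [UU_open.mem_nhds hz] with x hx
      exact hwm.mul (hmeas F hF.continuousOn x hx)
    · apply hw.mul_continuousOn
      rw [Set.uIcc_of_le zero_le_one]
      exact hcont F hF.continuousOn z hz
    · refine hwm.mul (AEStronglyMeasurable.mul ?_ (hmeas _ hF'.continuousOn z hz))
      exact Complex.continuous_ofReal.aestronglyMeasurable
    · refine Filter.Eventually.of_forall fun t ht x hx => ?_
      rw [Set.uIoc_of_le zero_le_one] at ht
      rw [norm_mul]
      gcongr
      exact hM (t, x) ⟨⟨ht.1.le, ht.2⟩, Metric.ball_subset_closedBall hx⟩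
    · exact hw.norm.mul_const M
    · refine Filter.Eventually.of_forall fun t ht x hx => ?_
      rw [Set.uIoc_of_le zero_le_one] at ht
      have hx' : (t:ℂ) * x ∈ UU := UU_star (hball (Metric.ball_subset_closedBall hx)) ht.1.le ht.2
      have h1 : HasDerivAt F (deriv F (t * x)) (t * x) :=
        (hF.differentiableAt (UU_open.mem_nhds hx')).hasDerivAt
      have h2 : HasDerivAt (fun x : ℂ => (t:ℂ) * x) t x := by
        simpa using (hasDerivAt_id x).const_mul (t:ℂ)
      have := (h1.comp x h2).const_mul (w t)
      rw [mul_comm (t:ℂ) (deriv F _)]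
      exact this
  · intro z hz
    have hsum : Summable (fun m => ‖q m * z ^ m‖) := (hs z hz).summable.norm
    have key := intervalIntegral.hasSum_integral_of_dominated_convergence
      (μ := volume) (a := 0) (b := 1)
      (F := fun m (t:ℝ) => w t * (t:ℂ)^m * (q m * z ^ m)) (f := fun t => w t * F (t * z))
      (fun m t => ‖w t‖ * ‖q m * z ^ m‖) ?_ ?_ ?_ ?_ ?_
    · refine key.congr_fun ?_ |> id
      intro m
      simp only [intervalIntegral.integral_mul_const]
      ring
    · intro m
      refine (hwm.mul ?_).mul_const _
      exact (by fun_prop : Continuous fun t : ℝ => (t:ℂ)^m).aestronglyMeasurable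
    · intro m
      refine Filter.Eventually.of_forall fun t ht => ?_
      rw [Set.uIoc_of_le zero_le_one] at ht
      rw [norm_mul, norm_mul]
      gcongr
      rw [norm_pow, Complex.norm_real, Real.norm_of_nonneg ht.1.le]
      exact mul_le_of_le_one_right (norm_nonneg _) (pow_le_one₀ ht.1.le ht.2)
    · exact Filter.Eventually.of_forall fun t ht => hsum.mul_left _
    · simp_rw [tsum_mul_left]
      exact hw.norm.mul_const _
    · refine Filter.Eventually.of_forall fun t ht => ?_
      rw [Set.uIoc_of_le zero_le_one] at ht
      have : ‖(t:ℂ) * z‖ < 1 := by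
        rw [norm_mul, Complex.norm_real, Real.norm_of_nonneg ht.1.le]
        exact (mul_le_of_le_one_left (norm_nonneg _) ht.2).trans_lt hz
      have := (hs _ this).mul_left (w t)
      refine this.congr_fun ?_ |> id
      intro m
      rw [mul_pow]; ring

lemma SS_smul {q : ℕ → ℂ} (h : SS q) (C : ℂ) : SS (fun m => C * q m) := by
  obtain ⟨F, hF, hs⟩ := h
  refine ⟨fun z => C * F z, hF.const_mul C, fun z hz => ?_⟩
  simpa [mul_assoc] using (hs z hz).mul_left C

noncomputable def rr (a b : ℝ) (m : ℕ) : ℂ := ((Real.Gamma (a + m) / Real.Gamma (b + m) : ℝ) : ℂ)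

open MeasureTheory in
lemma SS_beta {q : ℕ → ℂ} (h : SS q) {a b : ℝ} (ha : 0 < a) (hab : a < b) :
    SS (fun m => rr a b m * q m) := by
  have hw := Complex.betaIntegral_convergent (u := a) (v := ((b - a : ℝ) : ℂ))
    (by simpa using ha) (by simpa using hab)
  have := SS_smul (SS_moment h _ hw) (Real.Gamma (b - a) : ℂ)⁻¹
  convert this using 2 with m
  have hm : (0:ℝ) ≤ m := Nat.cast_nonneg m
  have e : (∫ t in (0:ℝ)..1, (t:ℂ) ^ ((a:ℂ) - 1) * (1 - (t:ℂ)) ^ (((b - a : ℝ) : ℂ) - 1) * (t:ℂ) ^ m)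
      = Complex.betaIntegral ((a + m : ℝ) : ℂ) ((b - a : ℝ) : ℂ) := by
    unfold Complex.betaIntegral
    apply intervalIntegral.integral_congr_ae
    refine Filter.Eventually.of_forall fun t ht => ?_
    rw [Set.uIoc_of_le zero_le_one] at ht
    have ht0 : (t:ℂ) ≠ 0 := by exact_mod_cast ht.1.ne'
    have : (((a + m : ℝ) : ℂ) - 1) = ((a:ℂ) - 1) + m := by push_cast; ring
    rw [this, Complex.cpow_add _ _ ht0, Complex.cpow_natCast]
    ring
  have g := Complex.Gamma_mul_Gamma_eq_betaIntegral (s := ((a + m : ℝ) : ℂ))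
    (t := ((b - a : ℝ) : ℂ)) (by simp; linarith) (by simpa using hab)
  rw [e]
  have e2 : ((a + m : ℝ) : ℂ) + ((b - a : ℝ) : ℂ) = ((b + m : ℝ) : ℂ) := by push_cast; ring
  rw [e2] at g
  simp only [Complex.Gamma_ofReal] at g
  have n1 : (Real.Gamma (b + m) : ℂ) ≠ 0 := by
    exact_mod_cast (Real.Gamma_pos_of_pos (by linarith)).ne'
  have n2 : (Real.Gamma (b - a) : ℂ) ≠ 0 := by
    exact_mod_cast (Real.Gamma_pos_of_pos (by linarith)).ne'
  unfold rr
  rw [Complex.ofReal_div, ← mul_assoc]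
  congr 1
  rw [div_eq_iff n1, mul_assoc, eq_inv_mul_iff_mul_eq₀ n2, mul_comm, g, mul_comm]

lemma SS_ratio (N : ℕ) : ∀ {q : ℕ → ℂ} (_ : SS q) {a b : ℝ} (_ : 0 < a) (_ : 0 < b)
    (_ : a < b + N), SS (fun m => rr a b m * q m) := by
  induction N with
  | zero => intro q h a b ha hb hab; exact SS_beta h ha (by simpa using hab)
  | succ N ih =>
    intro q h a b ha hb hab
    have := SS_poly (ih h (a := a) (b := b + 1) ha (by linarith) (by push_cast at hab; linarith)) b
    convert this using 2 with m
    have hm : (0:ℝ) ≤ m := Nat.cast_nonneg m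
    have g := Real.Gamma_add_one (s := b + m) (by linarith)
    have n1 := (Real.Gamma_pos_of_pos (s := b + m) (by linarith)).ne'
    have n2 : b + m ≠ 0 := by linarith
    rw [← mul_assoc]
    congr 1
    unfold rr
    rw [show b + 1 + (m:ℝ) = b + m + 1 by ring, g]
    rw [show ((m:ℂ) + b) = ((b + m : ℝ) : ℂ) by push_cast; ring, ← Complex.ofReal_mul]
    congr 1
    field_simp

lemma SS_ratio' {q : ℕ → ℂ} (h : SS q) {a b : ℝ} (ha : 0 < a) (hb : 0 < b) :
    SS (fun m => rr a b m * q m) := by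
  obtain ⟨N, hN⟩ := exists_nat_gt a
  exact SS_ratio N h ha hb (by linarith)

lemma prod_gamma {a : ℝ} (ha : 0 < a) (m : ℕ) :
    (∏ l ∈ Finset.range m, (-(a + l)) ^ 3) * Real.Gamma a ^ 3 =
      (-1) ^ m * Real.Gamma (a + m) ^ 3 := by
  induction m with
  | zero => simp
  | succ m ih =>
    have hm : (0:ℝ) ≤ m := Nat.cast_nonneg m
    rw [Finset.prod_range_succ, mul_right_comm, ih]
    push_cast
    rw [← add_assoc, Real.Gamma_add_one (s := a + m) (by linarith)]
    ring

lemma coeff_eq {a lam : ℝ} {k : ℕ} (ha : 0 < a) (hl : a = lam + (k:ℝ) / 2) (m : ℕ) :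
    (∏ l ∈ Finset.range m, (-lam - ((k : ℝ) / 2 + (l : ℝ))) ^ 3) /
        (Real.Gamma (1 + (m : ℝ) + (k : ℝ) / 2 + lam) * ((2 * m + k).factorial : ℝ)) =
    (√Real.pi / (Real.Gamma a ^ 3 * 2 ^ k)) * ((Real.Gamma (a + m) / Real.Gamma (a + 1 + m)) *
      ((Real.Gamma (a + m) / Real.Gamma (((k:ℝ) + 1) / 2 + m)) *
      (Real.Gamma (a + m) / Real.Gamma ((k:ℝ) / 2 + 1 + m)))) * (-1 / 4) ^ m := by
  have hm : (0:ℝ) ≤ m := Nat.cast_nonneg m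
  have hk : (0:ℝ) ≤ k := Nat.cast_nonneg k
  have hp := prod_gamma ha m
  have e : ∀ l : ℕ, (-lam - ((k : ℝ) / 2 + (l : ℝ))) = -(a + l) := by intro l; rw [hl]; ring
  simp_rw [e]
  rw [show 1 + (m : ℝ) + (k : ℝ) / 2 + lam = a + 1 + m by rw [hl]; ring]
  have d := Real.Gamma_mul_Gamma_add_half (((k:ℝ) + 1) / 2 + m)
  rw [show ((k:ℝ) + 1) / 2 + m + 1 / 2 = (k:ℝ) / 2 + 1 + m by ring,
    show 2 * (((k:ℝ) + 1) / 2 + m) = ((2 * m + k : ℕ) : ℝ) + 1 by push_cast; ring,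
    Real.Gamma_nat_eq_factorial,
    show 1 - (((2 * m + k : ℕ) : ℝ) + 1) = -((2 * m + k : ℕ) : ℝ) by ring,
    Real.rpow_neg (by norm_num), Real.rpow_natCast, pow_add, pow_mul] at d
  have g0 := (Real.Gamma_pos_of_pos ha).ne'
  have g1 := (Real.Gamma_pos_of_pos (s := a + 1 + m) (by linarith)).ne'
  have g2 := (Real.Gamma_pos_of_pos (s := ((k:ℝ) + 1) / 2 + m) (by positivity)).ne'
  have g3 := (Real.Gamma_pos_of_pos (s := (k:ℝ) / 2 + 1 + m) (by positivity)).ne'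
  have f0 : ((2 * m + k).factorial : ℝ) ≠ 0 := by exact_mod_cast (Nat.factorial_pos _).ne'
  have s0 : √Real.pi ≠ 0 := (Real.sqrt_pos.2 Real.pi_pos).ne'
  rw [← eq_div_iff (pow_ne_zero 3 g0)] at hp
  rw [hp]
  generalize Real.Gamma (((k:ℝ) + 1) / 2 + m) = A at *
  generalize Real.Gamma ((k:ℝ) / 2 + 1 + m) = B at *
  have hA : A = ((2 * m + k).factorial : ℝ) * ((2 ^ 2) ^ m * 2 ^ k)⁻¹ * √Real.pi / B := by
    rw [← d]; field_simp
  subst hA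
  rw [div_pow]
  field_simp
  norm_num

theorem stmt_3 (lam : ℝ) (hpos : 0 < lam) (hirr : Irrational lam)
    (k : ℕ) (hk : k ≤ 1)
    (c : ℕ → ℝ)
    (hc : ∀ m : ℕ, c m =
      (∏ l ∈ Finset.range m, (-lam - ((k : ℝ) / 2 + (l : ℝ))) ^ 3) /
        (Real.Gamma (1 + (m : ℝ) + (k : ℝ) / 2 + lam) * ((2 * m + k).factorial : ℝ))) :
    ∃ G : ℂ → ℂ, DifferentiableOn ℂ G Complex.slitPlane ∧
      ∀ τ ∈ Complex.slitPlane, ‖τ‖ < 4 →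
        G τ = ∑' m : ℕ, (c m : ℂ) * τ ^ ((m : ℂ) + (k : ℂ) / 2 + (lam : ℂ)) := by
  obtain ⟨a, hl⟩ : ∃ a : ℝ, a = lam + (k:ℝ) / 2 := ⟨_, rfl⟩
  have ha : 0 < a := by rw [hl]; positivity
  have h := SS_smul (SS_ratio' (SS_ratio' (SS_ratio' SS_one ha (b := (k:ℝ) / 2 + 1) (by positivity))
    ha (b := ((k:ℝ) + 1) / 2) (by positivity)) ha (b := a + 1) (by positivity))
    ((√Real.pi / (Real.Gamma a ^ 3 * 2 ^ k) : ℝ) : ℂ)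
  obtain ⟨F, hF, hs⟩ := h
  refine ⟨fun τ => τ ^ (a:ℂ) * F (-τ / 4), ?_, ?_⟩
  · refine DifferentiableOn.mul ?_ (hF.comp (by fun_prop) ?_)
    · intro τ hτ
      exact (DifferentiableAt.cpow_const differentiableAt_id hτ).differentiableWithinAt
    · intro τ hτ
      simp only [UU, Set.mem_ofPred_eq, Complex.mem_slitPlane_iff] at *
      have e : 1 - -τ / 4 = 1 + ((1/4 : ℝ) : ℂ) * τ := by push_cast; ring
      rw [e]
      simp only [Complex.add_re, Complex.add_im, Complex.re_ofReal_mul, Complex.im_ofReal_mul,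
        Complex.one_re, Complex.one_im]
      rcases hτ with h | h
      · left; linarith
      · right; simpa using h
  · intro τ hτ hn
    have hz : ‖-τ / 4‖ < 1 := by
      rw [norm_div, norm_neg]; norm_num; linarith
    have := ((hs _ hz).mul_left (τ ^ (a:ℂ))).tsum_eq
    beta_reduce
    rw [← this]
    refine tsum_congr fun m => ?_
    rw [hc m, coeff_eq ha hl m]
    have e : (m : ℂ) + (k : ℂ) / 2 + (lam : ℂ) = (a:ℂ) + m := by rw [hl]; push_cast; ring
    rw [e, Complex.cpow_add _ _ (Complex.slitPlane_ne_zero hτ), Complex.cpow_natCast]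
    have e2 : (-τ / 4) ^ m = (-1 / 4) ^ m * τ ^ m := by rw [← mul_pow]; ring
    rw [e2]
    simp only [rr]
    push_cast
    ring
end

section
/- Let a ≥ 0 and C > 0, and let f : [0,∞) → C be continuous with f(0) = 0, differentiable on (0,∞), and satisfying |f(τ)| ≤ C·e^{aτ} and τ·|f′(τ)| ≤ C·e^{aτ} for all τ > 0. For real u > a define F(u) = u·∫₀^∞ e^{−uτ} f(τ) dτ. Then F is differentiable on (a,∞), and for all complex numbers α, β and all real u > a the function τ ↦ e^{−uτ}(α·τ·f′(τ) + β·f(τ)) is integrable on (0,∞) and u·∫₀^∞ e^{−uτ}(α·τ·f′(τ) + β·f(τ)) dτ = −α·u·F′(u) + β·F(u). -/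
open MeasureTheory

theorem aux_int (u b K : ℝ) (h : b < u) (g : ℝ → ℂ)
    (hm : AEStronglyMeasurable g (volume.restrict (Set.Ioi 0)))
    (hb : ∀ τ : ℝ, 0 < τ → ‖g τ‖ ≤ K * Real.exp (b * τ)) :
    IntegrableOn (fun τ : ℝ => Complex.exp (-(u : ℂ) * (τ : ℂ)) * g τ) (Set.Ioi 0) := by
  have hi : IntegrableOn (fun τ : ℝ => K * Real.exp ((b - u) * τ)) (Set.Ioi 0) :=
    (integrableOn_exp_mul_Ioi (by linarith) 0).const_mul K
  refine Integrable.mono' hi ?_ ?_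
  · refine AEStronglyMeasurable.mul ?_ hm
    exact Continuous.aestronglyMeasurable (by fun_prop)
  · refine (ae_restrict_iff' measurableSet_Ioi).2 (Filter.Eventually.of_forall fun τ hτ => ?_)
    have h1 : ‖Complex.exp (-(u : ℂ) * (τ : ℂ))‖ = Real.exp (-u * τ) := by
      rw [Complex.norm_exp]; simp
    rw [norm_mul, h1]
    calc Real.exp (-u * τ) * ‖g τ‖ ≤ Real.exp (-u * τ) * (K * Real.exp (b * τ)) := by
          gcongr; exact hb τ hτ
      _ = K * Real.exp ((b - u) * τ) := by
          rw [sub_mul, sub_eq_add_neg, Real.exp_add, neg_mul]; ring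

theorem aux_bd (a C δ : ℝ) (hδ : 0 < δ) (hC : 0 < C) (f : ℝ → ℂ)
    (hf_bd : ∀ τ : ℝ, 0 < τ → ‖f τ‖ ≤ C * Real.exp (a * τ)) (τ : ℝ) (hτ : 0 < τ) :
    ‖(τ : ℂ) * f τ‖ ≤ C / δ * Real.exp ((a + δ) * τ) := by
  rw [norm_mul, Complex.norm_real, Real.norm_of_nonneg hτ.le]
  have h1 : τ ≤ Real.exp (δ * τ) / δ := by
    rw [le_div_iff₀ hδ]
    linarith [Real.add_one_le_exp (δ * τ)]
  calc τ * ‖f τ‖ ≤ (Real.exp (δ * τ) / δ) * (C * Real.exp (a * τ)) := by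
        gcongr; exact hf_bd τ hτ
    _ = _ := by rw [add_mul, Real.exp_add]; ring

theorem aux_norm (x τ : ℝ) : ‖Complex.exp (-(x : ℂ) * (τ : ℂ))‖ = Real.exp (-x * τ) := by
  rw [Complex.norm_exp]; simp

theorem aux_deriv (a C : ℝ) (hC : 0 < C) (f : ℝ → ℂ)
    (hm : AEStronglyMeasurable f (volume.restrict (Set.Ioi 0)))
    (hf_bd : ∀ τ : ℝ, 0 < τ → ‖f τ‖ ≤ C * Real.exp (a * τ)) (u : ℝ) (hu : a < u) :
    HasDerivAt (fun x : ℝ => ∫ τ in Set.Ioi (0 : ℝ), Complex.exp (-(x : ℂ) * (τ : ℂ)) * f τ)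
      (∫ τ in Set.Ioi (0 : ℝ), -(Complex.exp (-(u : ℂ) * (τ : ℂ)) * ((τ : ℂ) * f τ))) u := by
  obtain ⟨δ, hδ, hu'⟩ : ∃ δ : ℝ, 0 < δ ∧ a + 2 * δ < u := ⟨(u - a) / 4, by linarith, by linarith⟩
  refine (hasDerivAt_integral_of_dominated_loc_of_deriv_le (s := Set.Ioi (a + 2 * δ))
    (μ := volume.restrict (Set.Ioi (0 : ℝ)))
    (F := fun (x : ℝ) (τ : ℝ) => Complex.exp (-(x : ℂ) * (τ : ℂ)) * f τ)
    (bound := fun τ => C / δ * Real.exp (-δ * τ))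
    (F' := fun (x : ℝ) (τ : ℝ) => -(Complex.exp (-(x : ℂ) * (τ : ℂ)) * ((τ : ℂ) * f τ)))
    (Ioi_mem_nhds hu') ?_ (aux_int u a C hu f hm hf_bd) ?_ ?_ ?_ ?_).2
  · refine Filter.Eventually.of_forall fun x => AEStronglyMeasurable.mul ?_ hm
    exact Continuous.aestronglyMeasurable (by fun_prop)
  · refine (AEStronglyMeasurable.mul ?_ (AEStronglyMeasurable.mul ?_ hm)).neg
    · exact Continuous.aestronglyMeasurable (by fun_prop)
    · exact Continuous.aestronglyMeasurable (by fun_prop)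
  · refine (ae_restrict_iff' measurableSet_Ioi).2 (Filter.Eventually.of_forall fun τ hτ x hx => ?_)
    have hτ' : 0 < τ := hτ
    have hx' : a + 2 * δ < x := hx
    rw [norm_neg, norm_mul, aux_norm]
    calc Real.exp (-x * τ) * ‖(τ : ℂ) * f τ‖
        ≤ Real.exp (-x * τ) * (C / δ * Real.exp ((a + δ) * τ)) := by
          gcongr; exact aux_bd a C δ hδ hC f hf_bd τ hτ
      _ = C / δ * Real.exp ((a + δ - x) * τ) := by
          rw [sub_mul, sub_eq_add_neg, Real.exp_add, neg_mul]; ring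
      _ ≤ C / δ * Real.exp (-δ * τ) := by
          gcongr; linarith
  · exact (integrableOn_exp_mul_Ioi (by linarith) 0).const_mul _
  · refine Filter.Eventually.of_forall fun τ x _ => ?_
    have h1 : HasDerivAt (fun x : ℝ => -(x : ℂ) * (τ : ℂ)) (-1 * (τ : ℂ)) x :=
      ((Complex.ofRealCLM.hasDerivAt (x := x)).neg.mul_const (τ : ℂ))
    have h2 := h1.cexp.mul_const (f τ)
    refine h2.congr_deriv ?_
    ring

/-- the Laplace-transform intertwining identity, Equation (5.8) of the paper.
Let `a ≥ 0`, `C > 0`, and let `f : [0,∞) → ℂ` be continuous with `f(0) = 0`, differentiable on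
`(0,∞)`, with `|f(τ)| ≤ C·e^{aτ}` and `τ·|f′(τ)| ≤ C·e^{aτ}` for `τ > 0`.  For `u > a` set
`F(u) = u·∫₀^∞ e^{−uτ} f(τ) dτ`.  Then `F` is differentiable on `(a,∞)`, and for all complex
`α, β` and real `u > a` the function `τ ↦ e^{−uτ}(α·τ·f′(τ) + β·f(τ))` is integrable on
`(0,∞)` and `u·∫₀^∞ e^{−uτ}(α·τ·f′(τ) + β·f(τ)) dτ = −α·u·F′(u) + β·F(u)`. -/
theorem stmt_4 (a C : ℝ) (ha : 0 ≤ a) (hC : 0 < C) (f : ℝ → ℂ)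
    (hf_cont : ContinuousOn f (Set.Ici 0)) (hf0 : f 0 = 0)
    (hf_diff : ∀ τ : ℝ, 0 < τ → DifferentiableAt ℝ f τ)
    (hf_bd : ∀ τ : ℝ, 0 < τ → ‖f τ‖ ≤ C * Real.exp (a * τ))
    (hf'_bd : ∀ τ : ℝ, 0 < τ → τ * ‖deriv f τ‖ ≤ C * Real.exp (a * τ))
    (F : ℝ → ℂ)
    (hF : ∀ u : ℝ, a < u →
      F u = (u : ℂ) * ∫ τ in Set.Ioi (0 : ℝ), Complex.exp (-(u : ℂ) * (τ : ℂ)) * f τ) :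
    (∀ u : ℝ, a < u → DifferentiableAt ℝ F u) ∧
    ∀ (α β : ℂ) (u : ℝ), a < u →
      IntegrableOn
        (fun τ : ℝ => Complex.exp (-(u : ℂ) * (τ : ℂ)) *
          (α * (τ : ℂ) * deriv f τ + β * f τ)) (Set.Ioi 0) ∧
      (u : ℂ) * ∫ τ in Set.Ioi (0 : ℝ), Complex.exp (-(u : ℂ) * (τ : ℂ)) *
          (α * (τ : ℂ) * deriv f τ + β * f τ)
        = -α * (u : ℂ) * deriv F u + β * F u := by
  have hm : AEStronglyMeasurable f (volume.restrict (Set.Ioi 0)) :=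
    (hf_cont.mono Set.Ioi_subset_Ici_self).aestronglyMeasurable measurableSet_Ioi
  have hmτ : AEStronglyMeasurable (fun τ : ℝ => (τ : ℂ)) (volume.restrict (Set.Ioi 0)) :=
    Continuous.aestronglyMeasurable (by fun_prop)
  have hm' : AEStronglyMeasurable (fun τ : ℝ => (τ : ℂ) * deriv f τ)
      (volume.restrict (Set.Ioi 0)) := hmτ.mul (aestronglyMeasurable_deriv f _)
  have hFd : ∀ u : ℝ, a < u → HasDerivAt F
      (1 * (∫ τ in Set.Ioi (0 : ℝ), Complex.exp (-(u : ℂ) * (τ : ℂ)) * f τ) + (u : ℂ) *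
      (∫ τ in Set.Ioi (0 : ℝ), -(Complex.exp (-(u : ℂ) * (τ : ℂ)) * ((τ : ℂ) * f τ)))) u := by
    intro u hu
    have h1 := (Complex.ofRealCLM.hasDerivAt (x := u)).mul (aux_deriv a C hC f hm hf_bd u hu)
    refine (HasDerivAt.congr_of_eventuallyEq h1 ?_)
    filter_upwards [Ioi_mem_nhds hu] with x hx
    exact hF x hx
  refine ⟨fun u hu => (hFd u hu).differentiableAt, fun α β u hu => ?_⟩
  obtain ⟨δ, hδ, hu'⟩ : ∃ δ : ℝ, 0 < δ ∧ a + 2 * δ < u := ⟨(u - a) / 4, by linarith, by linarith⟩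
  have i1 := aux_int u a C hu f hm hf_bd
  have i2 := aux_int u a C hu _ hm' (fun τ hτ => by
    rw [norm_mul, Complex.norm_real, Real.norm_of_nonneg hτ.le]; exact hf'_bd τ hτ)
  have i3 := aux_int u (a + δ) (C / δ) (by linarith) _ (hmτ.mul hm) (aux_bd a C δ hδ hC f hf_bd)
  simp only [Pi.mul_apply] at i3
  have e : (fun τ : ℝ => Complex.exp (-(u : ℂ) * (τ : ℂ)) *
          (α * (τ : ℂ) * deriv f τ + β * f τ)) = fun τ : ℝ =>
        α * (Complex.exp (-(u : ℂ) * (τ : ℂ)) * ((τ : ℂ) * deriv f τ)) +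
        β * (Complex.exp (-(u : ℂ) * (τ : ℂ)) * f τ) := by
    funext τ; ring
  have key : ∫ τ in Set.Ioi (0 : ℝ), ((Complex.exp (-(u : ℂ) * (τ : ℂ)) * f τ +
      Complex.exp (-(u : ℂ) * (τ : ℂ)) * ((τ : ℂ) * deriv f τ)) -
      (u : ℂ) * (Complex.exp (-(u : ℂ) * (τ : ℂ)) * ((τ : ℂ) * f τ))) = 0 := by
    have := integral_Ioi_of_hasDerivAt_of_tendsto (a := (0 : ℝ)) (m := (0 : ℂ))
      (f := fun τ : ℝ => Complex.exp (-(u : ℂ) * (τ : ℂ)) * ((τ : ℂ) * f τ))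
      (f' := fun τ : ℝ => (Complex.exp (-(u : ℂ) * (τ : ℂ)) * f τ +
      Complex.exp (-(u : ℂ) * (τ : ℂ)) * ((τ : ℂ) * deriv f τ)) -
      (u : ℂ) * (Complex.exp (-(u : ℂ) * (τ : ℂ)) * ((τ : ℂ) * f τ))) ?_ ?_ ?_ ?_
    · rw [this]; simp
    · have h0 := hf_cont 0 (Set.mem_Ici.2 le_rfl)
      refine ContinuousWithinAt.mul ?_ (ContinuousWithinAt.mul ?_ h0)
      · exact Continuous.continuousWithinAt (by fun_prop)
      · exact Continuous.continuousWithinAt (by fun_prop)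
    · intro τ hτ
      have h1 : HasDerivAt (fun τ : ℝ => -(u : ℂ) * (τ : ℂ)) (-(u : ℂ) * 1) τ :=
        ((Complex.ofRealCLM.hasDerivAt (x := τ)).const_mul (-(u : ℂ)))
      have h2 : HasDerivAt (fun τ : ℝ => (τ : ℂ)) 1 τ := Complex.ofRealCLM.hasDerivAt (x := τ)
      refine (h1.cexp.mul (h2.mul (hf_diff τ hτ).hasDerivAt)).congr_deriv ?_
      simp only [Pi.mul_apply]
      ring
    · exact (i1.add i2).sub (i3.const_mul _)
    · have ht : Filter.Tendsto (fun τ : ℝ => C / δ * Real.exp (-(δ * τ))) Filter.atTop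
          (nhds (C / δ * 0)) :=
        (Real.tendsto_exp_neg_atTop_nhds_zero.comp
          (Filter.tendsto_id.const_mul_atTop hδ)).const_mul _
      rw [mul_zero] at ht
      refine squeeze_zero_norm' ?_ ht
      filter_upwards [Filter.eventually_gt_atTop 0] with τ hτ
      rw [norm_mul, aux_norm]
      calc Real.exp (-u * τ) * ‖(τ : ℂ) * f τ‖
          ≤ Real.exp (-u * τ) * (C / δ * Real.exp ((a + δ) * τ)) := by
            gcongr; exact aux_bd a C δ hδ hC f hf_bd τ hτ
        _ = C / δ * Real.exp ((a + δ - u) * τ) := by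
            rw [sub_mul, sub_eq_add_neg, Real.exp_add, neg_mul]; ring
        _ ≤ C / δ * Real.exp (-(δ * τ)) := by
            rw [← neg_mul]
            gcongr; linarith
  have i12 : IntegrableOn (fun τ : ℝ => Complex.exp (-(u : ℂ) * (τ : ℂ)) * f τ +
      Complex.exp (-(u : ℂ) * (τ : ℂ)) * ((τ : ℂ) * deriv f τ)) (Set.Ioi 0) := i1.add i2
  rw [integral_sub i12 (i3.const_mul _), integral_add i1 i2, integral_const_mul] at key
  rw [(hFd u hu).deriv, hF u hu, e]
  refine ⟨(i2.const_mul α).add (i1.const_mul β), ?_⟩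
  rw [integral_add (i2.const_mul α) (i1.const_mul β), integral_const_mul, integral_const_mul,
    integral_neg]
  linear_combination (u : ℂ) * α * key
end

section
/- Let λ be a positive irrational real number, k ∈ {0,1}, b ≥ 0 and C > 0. Let g : (0,∞) → C be measurable with |g(τ)| ≤ C·e^{bτ} for all τ > 0, and suppose that for every integer M ≥ 0 there exist constants K_M, δ_M > 0 such that |g(τ) − Σ_{m=0}^{M−1} c_{k,m} τ^{m+k/2+λ}| ≤ K_M · τ^{M+k/2+λ} for all 0 < τ < δ_M. Then for every integer M ≥ 0 there exist constants K′_M, q_M such that for all real q ≥ q_M, | q·∫₀^∞ e^{−qτ} g(τ) dτ − Σ_{m=0}^{M−1} [∏_{l=0}^{m−1}(−λ−(k/2+l))³ / (2m+k)!] · q^{−m−k/2−λ} | ≤ K′_M · q^{−M−k/2−λ}. In other words, q·∫₀^∞ e^{−qτ} g(τ) dτ admits the power series asymptotic expansion Σ_{m≥0} [∏_{l=0}^{m−1}(−λ−(k/2+l))³/(2m+k)!] q^{−m−k/2−λ} as q → +∞. -/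
open MeasureTheory

lemma wat_int {a r : ℝ} (ha : 0 < a) (hr : 0 < r) :
    IntegrableOn (fun t : ℝ => t ^ a * Real.exp (-(r * t))) (Set.Ioi 0) ∧
    ∫ t in Set.Ioi (0:ℝ), t ^ a * Real.exp (-(r * t)) = r ^ (-(a+1)) * Real.Gamma (a+1) := by
  have key := Real.integral_rpow_mul_exp_neg_mul_Ioi (a := a+1) (by linarith) hr
  rw [one_div, Real.inv_rpow hr.le, ← Real.rpow_neg hr.le, add_sub_cancel_right] at key
  refine ⟨?_, key⟩
  have hG := Real.Gamma_pos_of_pos (show 0 < a+1 by linarith)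
  have : 0 < r ^ (-(a+1)) := Real.rpow_pos_of_pos hr _
  exact .of_integral_ne_zero (by rw [key]; positivity)

lemma wat_term {a q : ℝ} (ha : 0 < a) (hq : 0 < q) :
    IntegrableOn (fun t : ℝ => Complex.exp (-(q:ℂ) * (t:ℂ)) * (t:ℂ) ^ (a:ℂ)) (Set.Ioi 0) ∧
    ∫ t in Set.Ioi (0:ℝ), Complex.exp (-(q:ℂ) * (t:ℂ)) * (t:ℂ) ^ (a:ℂ)
      = ((q ^ (-(a+1)) * Real.Gamma (a+1) : ℝ) : ℂ) := by
  obtain ⟨h1, h2⟩ := wat_int ha hq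
  have he : Set.EqOn (fun t : ℝ => ((t ^ a * Real.exp (-(q * t)) : ℝ) : ℂ))
      (fun t : ℝ => Complex.exp (-(q:ℂ) * (t:ℂ)) * (t:ℂ) ^ (a:ℂ)) (Set.Ioi 0) := by
    intro t ht
    have ht' : (0:ℝ) ≤ t := le_of_lt ht
    simp only [Complex.ofReal_mul, Complex.ofReal_exp, Complex.ofReal_cpow ht', Complex.ofReal_neg]
    rw [mul_comm, neg_mul]
  constructor
  · exact (integrableOn_congr_fun he measurableSet_Ioi).1 (Integrable.ofReal h1)
  · rw [← setIntegral_congr_fun measurableSet_Ioi he, ← h2]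
    exact integral_ofReal

lemma wat_bound (a : ℕ → ℝ) (ha : ∀ m, 0 < a m) (hmono : Monotone a) (c : ℕ → ℝ)
    (b C : ℝ) (hb : 0 ≤ b) (hC : 0 < C) (g : ℝ → ℂ)
    (hg_bd : ∀ τ : ℝ, 0 < τ → ‖g τ‖ ≤ C * Real.exp (b * τ)) (M : ℕ)
    (h : ∃ K δ : ℝ, 0 < K ∧ 0 < δ ∧ ∀ τ : ℝ, 0 < τ → τ < δ →
      ‖g τ - ∑ m ∈ Finset.range M, (c m : ℂ) * (τ : ℂ) ^ (a m : ℂ)‖ ≤ K * τ ^ (a M)) :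
    ∃ L : ℝ, 0 < L ∧ ∀ τ : ℝ, 0 < τ →
      ‖g τ - ∑ m ∈ Finset.range M, (c m : ℂ) * (τ : ℂ) ^ (a m : ℂ)‖
        ≤ L * (τ ^ (a M) * Real.exp (b * τ)) := by
  obtain ⟨K, δ, hK, hδ, h⟩ := h
  have hS : 0 ≤ ∑ m ∈ Finset.range M, |c m| * δ ^ (a m - a M) :=
    Finset.sum_nonneg fun m _ => by positivity
  have hD : 0 < δ ^ (-(a M)) := Real.rpow_pos_of_pos hδ _
  refine ⟨K + C * δ ^ (-(a M)) + ∑ m ∈ Finset.range M, |c m| * δ ^ (a m - a M),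
    by positivity, fun τ hτ => ?_⟩
  have hP : 0 < τ ^ (a M) := Real.rpow_pos_of_pos hτ _
  have hE : 1 ≤ Real.exp (b * τ) := Real.one_le_exp (by positivity)
  by_cases hlt : τ < δ
  · refine (h τ hτ hlt).trans ?_
    have : τ ^ (a M) ≤ τ ^ (a M) * Real.exp (b * τ) := le_mul_of_one_le_right hP.le hE
    have h3 : 0 ≤ C * δ ^ (-(a M)) := by positivity
    exact mul_le_mul (by linarith) this hP.le (by positivity)
  · push Not at hlt
    have e1 : ‖g τ‖ ≤ C * δ ^ (-(a M)) * (τ ^ (a M) * Real.exp (b * τ)) := by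
      refine (hg_bd τ hτ).trans ?_
      have : 1 ≤ δ ^ (-(a M)) * τ ^ (a M) := by
        rw [Real.rpow_neg hδ.le, inv_mul_eq_div, one_le_div (Real.rpow_pos_of_pos hδ _)]
        exact Real.rpow_le_rpow hδ.le hlt (ha M).le
      calc C * Real.exp (b * τ) ≤ (C * Real.exp (b * τ)) * (δ ^ (-(a M)) * τ ^ (a M)) :=
            le_mul_of_one_le_right (by positivity) this
        _ = _ := by ring
    have e2 : ‖∑ m ∈ Finset.range M, (c m : ℂ) * (τ : ℂ) ^ (a m : ℂ)‖ ≤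
        (∑ m ∈ Finset.range M, |c m| * δ ^ (a m - a M)) * (τ ^ (a M) * Real.exp (b * τ)) := by
      rw [Finset.sum_mul]
      refine norm_sum_le_of_le _ fun m hm => ?_
      rw [norm_mul, Complex.norm_real, Real.norm_eq_abs, Complex.norm_cpow_eq_rpow_re_of_pos hτ,
        Complex.ofReal_re, mul_assoc]
      refine mul_le_mul_of_nonneg_left ?_ (abs_nonneg _)
      have hle : a m ≤ a M := hmono (Finset.mem_range.1 hm).le
      have e3 : τ ^ (a m) = τ ^ (a m - a M) * τ ^ (a M) := by
        rw [← Real.rpow_add hτ]; congr 1; ring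
      rw [e3]
      refine mul_le_mul (Real.rpow_le_rpow_of_nonpos hδ hlt (by linarith))
        (le_mul_of_one_le_right hP.le hE) hP.le (by positivity)
    refine (norm_sub_le _ _).trans ((add_le_add e1 e2).trans ?_)
    have : 0 ≤ K * (τ ^ (a M) * Real.exp (b * τ)) := by positivity
    linarith

lemma wat_main (a : ℕ → ℝ) (ha : ∀ m, 0 < a m) (hmono : Monotone a) (c : ℕ → ℝ)
    (b C : ℝ) (hb : 0 ≤ b) (hC : 0 < C) (g : ℝ → ℂ) (hg_meas : Measurable g)
    (hg_bd : ∀ τ : ℝ, 0 < τ → ‖g τ‖ ≤ C * Real.exp (b * τ)) (M : ℕ)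
    (h : ∃ K δ : ℝ, 0 < K ∧ 0 < δ ∧ ∀ τ : ℝ, 0 < τ → τ < δ →
      ‖g τ - ∑ m ∈ Finset.range M, (c m : ℂ) * (τ : ℂ) ^ (a m : ℂ)‖ ≤ K * τ ^ (a M)) :
    ∃ K' q₀ : ℝ, 0 < q₀ ∧ ∀ q : ℝ, q₀ ≤ q →
      ‖(q : ℂ) * (∫ τ in Set.Ioi (0 : ℝ), Complex.exp (-(q : ℂ) * (τ : ℂ)) * g τ)
        - ∑ m ∈ Finset.range M, ((c m * Real.Gamma (a m + 1) * q ^ (-(a m)) : ℝ) : ℂ)‖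
        ≤ K' * q ^ (-(a M)) := by
  obtain ⟨L, hL, hbd⟩ := wat_bound a ha hmono c b C hb hC g hg_bd M h
  refine ⟨L * 2 ^ (a M + 1) * Real.Gamma (a M + 1), 2 * b + 1, by linarith, fun q hq => ?_⟩
  have hq0 : 0 < q := by linarith
  have hqb : 0 < q - b := by linarith
  have hnexp : ∀ τ : ℝ, ‖Complex.exp (-(q : ℂ) * (τ : ℂ))‖ = Real.exp (-(q * τ)) := by
    intro τ
    rw [Complex.norm_exp]; simp
  have hgi : IntegrableOn (fun τ : ℝ => Complex.exp (-(q : ℂ) * (τ : ℂ)) * g τ) (Set.Ioi 0) := by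
    have h1 : IntegrableOn (fun τ : ℝ => C * Real.exp (-(q-b) * τ)) (Set.Ioi 0) :=
      (exp_neg_integrableOn_Ioi 0 hqb).const_mul C
    refine Integrable.mono' h1 ?_ ?_
    · exact (Measurable.mul (by fun_prop) hg_meas).aestronglyMeasurable
    · refine (ae_restrict_iff' measurableSet_Ioi).2 (ae_of_all _ fun τ hτ => ?_)
      rw [norm_mul, hnexp]
      calc _ ≤ Real.exp (-(q * τ)) * (C * Real.exp (b * τ)) :=
            mul_le_mul_of_nonneg_left (hg_bd τ hτ) (Real.exp_pos _).le
        _ = C * (Real.exp (-(q * τ)) * Real.exp (b * τ)) := by ring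
        _ = _ := by rw [← Real.exp_add]; congr 2; ring
  have hti : ∀ m ∈ Finset.range M, IntegrableOn (fun τ : ℝ => (c m : ℂ) *
      (Complex.exp (-(q : ℂ) * (τ : ℂ)) * (τ : ℂ) ^ (a m : ℂ))) (Set.Ioi 0) := fun m _ =>
    (wat_term (ha m) hq0).1.const_mul _
  have hsum : ∑ m ∈ Finset.range M, ((c m * Real.Gamma (a m + 1) * q ^ (-(a m)) : ℝ) : ℂ)
      = (q:ℂ) * ∫ τ in Set.Ioi (0:ℝ), ∑ m ∈ Finset.range M, (c m : ℂ) *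
      (Complex.exp (-(q : ℂ) * (τ : ℂ)) * (τ : ℂ) ^ (a m : ℂ)) := by
    rw [integral_finset_sum _ hti, Finset.mul_sum]
    refine Finset.sum_congr rfl fun m _ => ?_
    rw [integral_const_mul, (wat_term (ha m) hq0).2, ← Complex.ofReal_mul, ← Complex.ofReal_mul]
    congr 1
    have : q ^ (-(a m)) = q * q ^ (-(a m + 1)) := by
      rw [← Real.rpow_one_add' hq0.le (by have := ha m; intro h; linarith)]
      congr 1; ring
    rw [this]; ring
  rw [hsum, ← mul_sub, ← integral_sub hgi (integrable_finset_sum _ hti), norm_mul,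
    Complex.norm_real, Real.norm_of_nonneg hq0.le]
  obtain ⟨i1, i2⟩ := wat_int (ha M) hqb
  have hint : ‖∫ τ in Set.Ioi (0:ℝ), (Complex.exp (-(q : ℂ) * (τ : ℂ)) * g τ -
      ∑ m ∈ Finset.range M, (c m : ℂ) *
      (Complex.exp (-(q : ℂ) * (τ : ℂ)) * (τ : ℂ) ^ (a m : ℂ)))‖ ≤
      ∫ τ in Set.Ioi (0:ℝ), L * (τ ^ (a M) * Real.exp (-((q-b) * τ))) := by
    refine norm_integral_le_of_norm_le (i1.const_mul L) ?_
    refine (ae_restrict_iff' measurableSet_Ioi).2 (ae_of_all _ fun τ hτ => ?_)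
    have e : Complex.exp (-(q : ℂ) * (τ : ℂ)) * g τ -
      ∑ m ∈ Finset.range M, (c m : ℂ) *
      (Complex.exp (-(q : ℂ) * (τ : ℂ)) * (τ : ℂ) ^ (a m : ℂ)) =
      Complex.exp (-(q : ℂ) * (τ : ℂ)) *
        (g τ - ∑ m ∈ Finset.range M, (c m : ℂ) * (τ : ℂ) ^ (a m : ℂ)) := by
      rw [mul_sub, Finset.mul_sum]
      congr 1
      exact Finset.sum_congr rfl fun m _ => by ring
    rw [e, norm_mul, hnexp]
    calc _ ≤ Real.exp (-(q * τ)) * (L * (τ ^ (a M) * Real.exp (b * τ))) :=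
          mul_le_mul_of_nonneg_left (hbd τ hτ) (Real.exp_pos _).le
      _ = L * (τ ^ (a M) * (Real.exp (-(q * τ)) * Real.exp (b * τ))) := by ring
      _ = _ := by rw [← Real.exp_add]; congr 3; ring
  rw [integral_const_mul, i2] at hint
  have hG := Real.Gamma_pos_of_pos (show 0 < a M + 1 by linarith [ha M])
  have hpow : q * (q - b) ^ (-(a M + 1)) ≤ 2 ^ (a M + 1) * q ^ (-(a M)) := by
    have h1 : (q - b) ^ (-(a M + 1)) ≤ (q / 2) ^ (-(a M + 1)) :=
      Real.rpow_le_rpow_of_nonpos (by linarith) (by linarith) (by linarith [ha M])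
    have h2 : (q / 2) ^ (-(a M + 1)) = q ^ (-(a M + 1)) * 2 ^ (a M + 1) := by
      rw [Real.div_rpow hq0.le (by norm_num), Real.rpow_neg (by norm_num : (0:ℝ) ≤ 2), div_inv_eq_mul]
    have h3 : q ^ (-(a M)) = q * q ^ (-(a M + 1)) := by
      rw [← Real.rpow_one_add' hq0.le (by have := ha M; intro h; linarith)]
      congr 1; ring
    rw [h3]
    calc _ ≤ q * (q ^ (-(a M + 1)) * 2 ^ (a M + 1)) :=
          mul_le_mul_of_nonneg_left (h1.trans h2.le) hq0.le
      _ = _ := by ring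
  calc _ ≤ q * (L * ((q - b) ^ (-(a M + 1)) * Real.Gamma (a M + 1))) :=
        mul_le_mul_of_nonneg_left hint hq0.le
    _ = L * Real.Gamma (a M + 1) * (q * (q - b) ^ (-(a M + 1))) := by ring
    _ ≤ L * Real.Gamma (a M + 1) * (2 ^ (a M + 1) * q ^ (-(a M))) :=
        mul_le_mul_of_nonneg_left hpow (by positivity)
    _ = _ := by ring

/-- Watson's lemma for the `[ℂ³/ℤ₂]` example.  Fix a positive irrational
real `λ`, `k ∈ {0,1}`, `b ≥ 0`, `C > 0`, and let
`c_{k,m} = [∏_{l=0}^{m−1} (−λ−(k/2+l))³] / [Γ(1+m+k/2+λ)·(2m+k)!]`.  If `g : (0,∞) → ℂ` is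
measurable with `|g(τ)| ≤ C·e^{bτ}`, and for every `M ≥ 0` one has
`|g(τ) − Σ_{m<M} c_{k,m} τ^{m+k/2+λ}| ≤ K_M·τ^{M+k/2+λ}` for small `τ > 0`, then
`q·∫₀^∞ e^{−qτ} g(τ) dτ` admits the power series asymptotic expansion
`Σ_{m≥0} [∏_{l=0}^{m−1}(−λ−(k/2+l))³/(2m+k)!]·q^{−m−k/2−λ}` as `q → +∞`. -/
theorem stmt_5 (lam : ℝ) (hpos : 0 < lam) (hirr : Irrational lam)
    (k : ℕ) (hk : k ≤ 1)
    (c : ℕ → ℝ)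
    (hc : ∀ m : ℕ, c m =
      (∏ l ∈ Finset.range m, (-lam - ((k : ℝ) / 2 + (l : ℝ))) ^ 3) /
        (Real.Gamma (1 + (m : ℝ) + (k : ℝ) / 2 + lam) * ((2 * m + k).factorial : ℝ)))
    (b C : ℝ) (hb : 0 ≤ b) (hC : 0 < C)
    (g : ℝ → ℂ) (hg_meas : Measurable g)
    (hg_bd : ∀ τ : ℝ, 0 < τ → ‖g τ‖ ≤ C * Real.exp (b * τ))
    (hg_asym : ∀ M : ℕ, ∃ K δ : ℝ, 0 < K ∧ 0 < δ ∧ ∀ τ : ℝ, 0 < τ → τ < δ →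
      ‖g τ - ∑ m ∈ Finset.range M,
          (c m : ℂ) * (τ : ℂ) ^ ((m : ℂ) + (k : ℂ) / 2 + (lam : ℂ))‖
        ≤ K * τ ^ ((M : ℝ) + (k : ℝ) / 2 + lam)) :
    ∀ M : ℕ, ∃ K' q₀ : ℝ, ∀ q : ℝ, q₀ ≤ q →
      ‖(q : ℂ) * (∫ τ in Set.Ioi (0 : ℝ), Complex.exp (-(q : ℂ) * (τ : ℂ)) * g τ)
        - ∑ m ∈ Finset.range M,
            (((∏ l ∈ Finset.range m, (-lam - ((k : ℝ) / 2 + (l : ℝ))) ^ 3) /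
                ((2 * m + k).factorial : ℝ) : ℝ) : ℂ) *
              (q : ℂ) ^ (-((m : ℂ) + (k : ℂ) / 2 + (lam : ℂ)))‖
        ≤ K' * q ^ (-((M : ℝ) + (k : ℝ) / 2 + lam)) := by
  intro M
  have hcast : ∀ m : ℕ, ((m : ℂ) + (k : ℂ) / 2 + (lam : ℂ))
      = (((m : ℝ) + (k : ℝ) / 2 + lam : ℝ) : ℂ) := by intro m; push_cast; ring
  have ha : ∀ m : ℕ, 0 < (m : ℝ) + (k : ℝ) / 2 + lam := fun m => by positivity
  have hmono : Monotone fun m : ℕ => (m : ℝ) + (k : ℝ) / 2 + lam := by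
    intro m n hmn
    have : (m : ℝ) ≤ n := by exact_mod_cast hmn
    simp only; linarith
  simp only [hcast] at hg_asym ⊢
  obtain ⟨K', q₀, hq₀, H⟩ := wat_main (fun m : ℕ => (m : ℝ) + (k : ℝ) / 2 + lam) ha hmono c b C
    hb hC g hg_meas hg_bd M (hg_asym M)
  refine ⟨K', q₀, fun q hq => ?_⟩
  have hq0 : 0 < q := by linarith
  refine le_trans (le_of_eq ?_) (H q hq)
  congr 2
  refine Finset.sum_congr rfl fun m _ => ?_
  rw [← Complex.ofReal_neg, ← Complex.ofReal_cpow hq0.le, ← Complex.ofReal_mul]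
  congr 1
  rw [hc m, show 1 + (m : ℝ) + (k : ℝ) / 2 + lam = (m : ℝ) + (k : ℝ) / 2 + lam + 1 by ring]
  have hG := (Real.Gamma_pos_of_pos (show 0 < (m : ℝ) + (k : ℝ) / 2 + lam + 1 by linarith [ha m])).ne'
  field_simp
end

section
/- Let λ be a real number with λ ≥ 3, and let g : (0,∞) → C be three times continuously differentiable such that: (i) (τ³+4τ²)·g‴(τ) + (3τ² + (10−8λ)τ)·g″(τ) + (τ + (2−2λ)(1−2λ))·g′(τ) = 0 for all τ > 0; (ii) g(τ), g′(τ), g″(τ), g‴(τ) all tend to 0 as τ → 0⁺; (iii) there exist constants C, p with |g^{(j)}(τ)| ≤ C(1+τ)^p for all τ > 0 and 0 ≤ j ≤ 3. Then F(q) := q·∫₀^∞ e^{−qτ} g(τ) dτ is well defined and infinitely differentiable on (0,∞) and satisfies [θ_q³ − q·(−2θ_q−2λ)(−2θ_q−2λ−1)] F(q) = 0 for all q > 0, where θ_q is the Euler operator θ_q F(q) = q·F′(q). -/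
open MeasureTheory

/-- Continuous on `(0,∞)` with sub-exponential growth. -/
def Good (f : ℝ → ℂ) : Prop :=
  ContinuousOn f (Set.Ioi 0) ∧ ∀ ε : ℝ, 0 < ε → ∃ C : ℝ, ∀ τ : ℝ, 0 < τ → ‖f τ‖ ≤ C * Real.exp (ε * τ)

/-- Laplace transform. -/
noncomputable def Lap (f : ℝ → ℂ) (q : ℝ) : ℂ :=
  ∫ τ in Set.Ioi (0 : ℝ), Complex.exp (-(q : ℂ) * (τ : ℂ)) * f τ

lemma norm_cexp_aux (q τ : ℝ) : ‖Complex.exp (-(q : ℂ) * (τ : ℂ))‖ = Real.exp (-q * τ) := by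
  rw [Complex.norm_exp]; simp

lemma Good.mul_id {f : ℝ → ℂ} (hf : Good f) : Good (fun τ => (τ : ℂ) * f τ) := by
  refine ⟨(Complex.continuous_ofReal.continuousOn).mul hf.1, fun ε hε => ?_⟩
  obtain ⟨C, hC⟩ := hf.2 (ε / 2) (by positivity)
  refine ⟨2 / ε * C, fun τ hτ => ?_⟩
  rw [norm_mul, Complex.norm_real, Real.norm_of_nonneg hτ.le]
  have h1 : τ ≤ 2 / ε * Real.exp (ε / 2 * τ) := by
    have := Real.add_one_le_exp (ε / 2 * τ)
    calc τ = 2 / ε * (ε / 2 * τ) := by field_simp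
      _ ≤ _ := by gcongr; linarith
  calc τ * ‖f τ‖ ≤ (2 / ε * Real.exp (ε / 2 * τ)) * (C * Real.exp (ε / 2 * τ)) := by
        gcongr; exact hC τ hτ
    _ = 2 / ε * C * (Real.exp (ε / 2 * τ) * Real.exp (ε / 2 * τ)) := by ring
    _ = _ := by rw [← Real.exp_add]; ring_nf

lemma Good.mul_pow {f : ℝ → ℂ} (hf : Good f) (n : ℕ) : Good (fun τ => (τ : ℂ) ^ n * f τ) := by
  induction n with
  | zero => simpa using hf
  | succ n ih =>
    have := ih.mul_id
    refine (congrArg Good (funext fun τ => ?_)).mp this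
    ring

lemma good_of_poly {f : ℝ → ℂ} (hc : ContinuousOn f (Set.Ioi 0)) (C p : ℝ)
    (h : ∀ τ : ℝ, 0 < τ → ‖f τ‖ ≤ C * (1 + τ) ^ p) : Good f := by
  refine ⟨hc, fun ε hε => ?_⟩
  obtain ⟨k, hk⟩ := exists_nat_gt (max p 0)
  have hk1 : p ≤ k := (le_max_left _ _).trans hk.le
  have hk0 : (0 : ℝ) < k := (le_max_right _ _).trans_lt hk
  set δ := ε / k with hδ
  have hδ0 : 0 < δ := by positivity
  refine ⟨|C| * ((1 / δ) ^ k * Real.exp ε), fun τ hτ => ?_⟩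
  have h1 : 1 + τ ≤ 1 / δ * Real.exp (δ * (1 + τ)) := by
    have := Real.add_one_le_exp (δ * (1 + τ))
    calc 1 + τ = 1 / δ * (δ * (1 + τ)) := by field_simp
      _ ≤ _ := by gcongr; linarith
  calc ‖f τ‖ ≤ C * (1 + τ) ^ p := h τ hτ
    _ ≤ |C| * (1 + τ) ^ (k : ℝ) := by
        apply mul_le_mul (le_abs_self C) _ (by positivity) (abs_nonneg C)
        exact Real.rpow_le_rpow_of_exponent_le (by linarith) hk1
    _ = |C| * (1 + τ) ^ k := by rw [Real.rpow_natCast]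
    _ ≤ |C| * (1 / δ * Real.exp (δ * (1 + τ))) ^ k := by gcongr
    _ = |C| * ((1 / δ) ^ k * Real.exp ε) * Real.exp (ε * τ) := by
        rw [_root_.mul_pow, ← Real.exp_nat_mul]
        have : (k : ℝ) * (δ * (1 + τ)) = ε + ε * τ := by rw [hδ]; field_simp
        rw [this, Real.exp_add]; ring

lemma Good.integrable {f : ℝ → ℂ} (hf : Good f) {q : ℝ} (hq : 0 < q) :
    IntegrableOn (fun τ : ℝ => Complex.exp (-(q : ℂ) * (τ : ℂ)) * f τ) (Set.Ioi 0) := by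
  obtain ⟨C, hC⟩ := hf.2 (q / 2) (by positivity)
  have hint : IntegrableOn (fun τ : ℝ => C * Real.exp (-(q / 2) * τ)) (Set.Ioi 0) :=
    (integrableOn_exp_mul_Ioi (by linarith) 0).const_mul C
  refine Integrable.mono' hint ?_ ?_
  · apply ContinuousOn.aestronglyMeasurable _ measurableSet_Ioi
    exact (by fun_prop : Continuous fun τ : ℝ => Complex.exp (-(q : ℂ) * (τ : ℂ))).continuousOn.mul hf.1
  · filter_upwards [ae_restrict_mem measurableSet_Ioi] with τ hτ
    rw [norm_mul, norm_cexp_aux]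
    calc Real.exp (-q * τ) * ‖f τ‖ ≤ Real.exp (-q * τ) * (C * Real.exp (q / 2 * τ)) := by
          gcongr; exact hC τ hτ
      _ = C * (Real.exp (-q * τ) * Real.exp (q / 2 * τ)) := by ring
      _ = _ := by rw [← Real.exp_add]; ring_nf

lemma Good.tendsto {f : ℝ → ℂ} (hf : Good f) {q : ℝ} (hq : 0 < q) :
    Filter.Tendsto (fun τ : ℝ => Complex.exp (-(q : ℂ) * (τ : ℂ)) * f τ) Filter.atTop (nhds 0) := by
  obtain ⟨C, hC⟩ := hf.2 (q / 2) (by positivity)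
  have h0 : Filter.Tendsto (fun τ : ℝ => C * Real.exp (-(q / 2 * τ))) Filter.atTop (nhds 0) := by
    have : Filter.Tendsto (fun τ : ℝ => q / 2 * τ) Filter.atTop Filter.atTop :=
      Filter.tendsto_id.const_mul_atTop (by positivity)
    simpa using (Real.tendsto_exp_neg_atTop_nhds_zero.comp this).const_mul C
  refine squeeze_zero_norm' ?_ h0
  filter_upwards [Filter.eventually_gt_atTop 0] with τ hτ
  rw [norm_mul, norm_cexp_aux]
  calc Real.exp (-q * τ) * ‖f τ‖ ≤ Real.exp (-q * τ) * (C * Real.exp (q / 2 * τ)) := by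
        gcongr; exact hC τ hτ
    _ = C * (Real.exp (-q * τ) * Real.exp (q / 2 * τ)) := by ring
    _ = _ := by rw [← Real.exp_add]; ring_nf

lemma Good.hasDerivAt {f : ℝ → ℂ} (hf : Good f) {q : ℝ} (hq : 0 < q) :
    HasDerivAt (Lap f) (-Lap (fun τ => (τ : ℂ) * f τ) q) q := by
  have hb := hf.mul_id.integrable (half_pos hq)
  have key := (hasDerivAt_integral_of_dominated_loc_of_deriv_le
    (μ := volume.restrict (Set.Ioi (0 : ℝ)))
    (F := fun (q : ℝ) (τ : ℝ) => Complex.exp (-(q : ℂ) * (τ : ℂ)) * f τ)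
    (F' := fun (q : ℝ) (τ : ℝ) => -(Complex.exp (-(q : ℂ) * (τ : ℂ)) * ((τ : ℂ) * f τ)))
    (x₀ := q) (s := Set.Ioi (q / 2))
    (bound := fun τ => ‖Complex.exp (-((q / 2 : ℝ) : ℂ) * (τ : ℂ)) * ((τ : ℂ) * f τ)‖)
    (Ioi_mem_nhds (by linarith)) ?_ (hf.integrable hq) ?_ ?_ hb.norm ?_).2
  · rw [integral_neg] at key
    exact key
  · filter_upwards [Ioi_mem_nhds hq] with x hx
    exact (hf.integrable hx).aestronglyMeasurable
  · exact (hf.mul_id.integrable hq).aestronglyMeasurable.neg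
  · filter_upwards [ae_restrict_mem measurableSet_Ioi] with τ hτ x hx
    rw [norm_neg, norm_mul, norm_mul _ ((τ : ℂ) * f τ), norm_cexp_aux, norm_cexp_aux]
    have h1 : q / 2 < x := hx
    have h2 : 0 < τ := hτ
    gcongr
  · filter_upwards with τ x hx
    have h1 : HasDerivAt (fun x : ℝ => -(x : ℂ) * (τ : ℂ)) (-1 * (τ : ℂ)) x :=
      ((Complex.ofRealCLM.hasDerivAt (x := x)).neg).mul_const _
    refine (h1.cexp.mul_const (f τ)).congr_deriv ?_
    ring

lemma Good.contDiffOn (n : ℕ) : ∀ {f : ℝ → ℂ}, Good f → ContDiffOn ℝ n (Lap f) (Set.Ioi 0) := by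
  induction n with
  | zero =>
    intro f hf
    exact contDiffOn_zero.mpr fun q hq => (hf.hasDerivAt hq).continuousAt.continuousWithinAt
  | succ n ih =>
    intro f hf
    push_cast
    rw [contDiffOn_succ_iff_deriv_of_isOpen isOpen_Ioi]
    refine ⟨fun q hq => (hf.hasDerivAt hq).differentiableAt.differentiableWithinAt, by simp, ?_⟩
    exact (ih hf.mul_id).neg.congr fun q hq => (hf.hasDerivAt hq).deriv

lemma lap_deriv {f f' : ℝ → ℂ} (hf : Good f) (hf' : Good f')
    (hd : ∀ τ : ℝ, 0 < τ → HasDerivAt f (f' τ) τ)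
    (h0 : Filter.Tendsto f (nhdsWithin 0 (Set.Ioi 0)) (nhds 0)) {q : ℝ} (hq : 0 < q) :
    Lap f' q = (q : ℂ) * Lap f q := by
  have he : ∀ x : ℝ, HasDerivAt (fun x : ℝ => Complex.exp (-(q : ℂ) * (x : ℂ)))
      (-(q : ℂ) * Complex.exp (-(q : ℂ) * (x : ℂ))) x := by
    intro x
    have h1 : HasDerivAt (fun x : ℝ => -(q : ℂ) * (x : ℂ)) (-(q : ℂ) * 1) x :=
      (Complex.ofRealCLM.hasDerivAt (x := x)).const_mul _
    convert h1.cexp using 1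
    ring
  have hi : IntegrableOn (fun x : ℝ => -(q : ℂ) * Complex.exp (-(q : ℂ) * (x : ℂ)) * f x)
      (Set.Ioi 0) := by
    have := (hf.integrable hq).const_mul (-(q : ℂ))
    refine (congrArg (fun h => Integrable h (volume.restrict (Set.Ioi (0 : ℝ)))) (funext fun τ => ?_)).mp this
    ring
  have h00 : Filter.Tendsto (fun τ : ℝ => Complex.exp (-(q : ℂ) * (τ : ℂ)) * f τ)
      (nhdsWithin 0 (Set.Ioi 0)) (nhds 0) := by
    have h1 : Filter.Tendsto (fun τ : ℝ => Complex.exp (-(q : ℂ) * (τ : ℂ)))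
      (nhdsWithin 0 (Set.Ioi 0)) (nhds (Complex.exp (-(q : ℂ) * ((0 : ℝ) : ℂ)))) :=
      ((he 0).continuousAt.tendsto).mono_left nhdsWithin_le_nhds
    simpa using h1.mul h0
  have := integral_Ioi_mul_deriv_eq_deriv_mul (a := (0 : ℝ))
    (u := fun x : ℝ => Complex.exp (-(q : ℂ) * (x : ℂ))) (v := f)
    (u' := fun x : ℝ => -(q : ℂ) * Complex.exp (-(q : ℂ) * (x : ℂ))) (v' := f')
    (a' := 0) (b' := 0) (fun x _ => he x) (fun x hx => hd x hx)
    (hf'.integrable hq) hi h00 (hf.tendsto hq)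
  rw [Lap, this, Lap, ← integral_const_mul, sub_zero, zero_sub, ← integral_neg]
  congr 1; funext τ; ring

/-- Moments. -/
noncomputable def Mom (f : ℝ → ℂ) (n : ℕ) (q : ℝ) : ℂ := Lap (fun τ => (τ : ℂ) ^ n * f τ) q

lemma mom_hasDerivAt {f : ℝ → ℂ} (hf : Good f) (n : ℕ) {q : ℝ} (hq : 0 < q) :
    HasDerivAt (Mom f n) (-Mom f (n + 1) q) q := by
  have := (hf.mul_pow n).hasDerivAt hq
  have e : (fun τ : ℝ => (τ : ℂ) * ((τ : ℂ) ^ n * f τ)) = fun τ : ℝ => (τ : ℂ) ^ (n + 1) * f τ := by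
    funext τ; ring
  rw [e] at this
  exact this

lemma mom_deriv {f f' : ℝ → ℂ} (hf : Good f) (hf' : Good f')
    (hd : ∀ τ : ℝ, 0 < τ → HasDerivAt f (f' τ) τ)
    (h0 : Filter.Tendsto f (nhdsWithin 0 (Set.Ioi 0)) (nhds 0)) (n : ℕ) {q : ℝ} (hq : 0 < q) :
    Mom f' n q = (q : ℂ) * Mom f n q - n * Mom f (n - 1) q := by
  have hadd : Lap (fun τ => (n : ℂ) * ((τ : ℂ) ^ (n - 1) * f τ) + (τ : ℂ) ^ n * f' τ) q
      = n * Mom f (n - 1) q + Mom f' n q := by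
    rw [Mom, Mom, Lap, Lap, Lap, ← integral_const_mul,
      ← integral_add (((hf.mul_pow (n - 1)).integrable hq).const_mul _)
        ((hf'.mul_pow n).integrable hq)]
    congr 1; funext τ; ring
  have hG : Good (fun τ => (n : ℂ) * ((τ : ℂ) ^ (n - 1) * f τ) + (τ : ℂ) ^ n * f' τ) := by
    refine ⟨(continuousOn_const.mul (hf.mul_pow (n - 1)).1).add (hf'.mul_pow n).1, fun ε hε => ?_⟩
    obtain ⟨C, hC⟩ := (hf.mul_pow (n - 1)).2 ε hε
    obtain ⟨D, hD⟩ := (hf'.mul_pow n).2 ε hε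
    refine ⟨n * C + D, fun τ hτ => (norm_add_le _ _).trans ?_⟩
    rw [norm_mul, Complex.norm_natCast, add_mul, mul_assoc]
    exact add_le_add (mul_le_mul_of_nonneg_left (hC τ hτ) (Nat.cast_nonneg n)) (hD τ hτ)
  have := lap_deriv (hf.mul_pow n) hG ?_ ?_ hq
  · rw [hadd] at this
    rw [eq_sub_iff_add_eq, add_comm]; exact this
  · intro τ hτ
    have h1 : HasDerivAt (fun x : ℝ => (x : ℂ)) 1 τ := Complex.ofRealCLM.hasDerivAt (x := τ)
    refine ((h1.pow n).mul (hd τ hτ)).congr_deriv ?_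
    simp only [Pi.pow_apply]
    ring
  · have h1 : Filter.Tendsto (fun τ : ℝ => (τ : ℂ) ^ n) (nhdsWithin 0 (Set.Ioi 0))
      (nhds (((0 : ℝ) : ℂ) ^ n)) :=
      ((by fun_prop : Continuous fun τ : ℝ => (τ : ℂ) ^ n).tendsto 0).mono_left nhdsWithin_le_nhds
    simpa using h1.mul h0

lemma euler_eq {f h : ℝ → ℂ} (hfh : ∀ q : ℝ, 0 < q → f q = h q) {q : ℝ} (hq : 0 < q) {h' : ℂ}
    (hh : HasDerivAt h h' q) : eulerOp f q = q * h' := by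
  have : f =ᶠ[nhds q] h := by
    filter_upwards [Ioi_mem_nhds hq] with x hx using hfh x hx
  rw [eulerOp, this.deriv_eq, hh.deriv]

/-- Step 3 of the paper's example.  Let `λ ≥ 3` be real and let
`g : (0,∞) → ℂ` be `C³`, satisfying the expanded regularized Picard–Fuchs equation
`(τ³+4τ²)g‴ + (3τ²+(10−8λ)τ)g″ + (τ+(2−2λ)(1−2λ))g′ = 0` on `(0,∞)`, with `g, g′, g″, g‴ → 0`
as `τ → 0⁺` and all of polynomial growth.  Then `F(q) = q·∫₀^∞ e^{−qτ} g(τ) dτ` is well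
defined and smooth on `(0,∞)` and satisfies the Picard–Fuchs equation of `Tot(O_{ℙ²}(−2))`
at `z = 1`: `[θ_q³ − q·(−2θ_q−2λ)(−2θ_q−2λ−1)] F = 0` on `(0,∞)`. -/
theorem stmt_6 (lam : ℝ) (hlam : 3 ≤ lam)
    (g : ℝ → ℂ)
    (hg_smooth : ContDiffOn ℝ 3 g (Set.Ioi 0))
    (hode : ∀ τ : ℝ, 0 < τ →
      ((τ : ℂ) ^ 3 + 4 * (τ : ℂ) ^ 2) * deriv^[3] g τ
        + (3 * (τ : ℂ) ^ 2 + (10 - 8 * (lam : ℂ)) * (τ : ℂ)) * deriv^[2] g τ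
        + ((τ : ℂ) + (2 - 2 * (lam : ℂ)) * (1 - 2 * (lam : ℂ))) * deriv g τ = 0)
    (hg0 : ∀ j ≤ 3, Filter.Tendsto (deriv^[j] g) (nhdsWithin 0 (Set.Ioi 0)) (nhds 0))
    (hpoly : ∃ C p : ℝ, ∀ τ : ℝ, 0 < τ → ∀ j ≤ 3, ‖deriv^[j] g τ‖ ≤ C * (1 + τ) ^ p)
    (F : ℝ → ℂ)
    (hF : ∀ q : ℝ, 0 < q →
      F q = (q : ℂ) * ∫ τ in Set.Ioi (0 : ℝ), Complex.exp (-(q : ℂ) * (τ : ℂ)) * g τ) :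
    (∀ q : ℝ, 0 < q →
      IntegrableOn (fun τ : ℝ => Complex.exp (-(q : ℂ) * (τ : ℂ)) * g τ) (Set.Ioi 0)) ∧
    ContDiffOn ℝ (⊤ : ℕ∞) F (Set.Ioi 0) ∧
    ∀ q : ℝ, 0 < q →
      eulerOp (eulerOp (eulerOp F)) q
        - (q : ℂ) * (-2 * eulerOp (fun s => -2 * eulerOp F s - (2 * (lam : ℂ) + 1) * F s) q
            - 2 * (lam : ℂ) * (-2 * eulerOp F q - (2 * (lam : ℂ) + 1) * F q)) = 0 := by
  obtain ⟨C, p, hCp⟩ := hpoly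
  have hd : ∀ j : ℕ, j ≤ 2 → ∀ τ : ℝ, 0 < τ → HasDerivAt (deriv^[j] g) (deriv^[j + 1] g τ) τ := by
    have hiter : ∀ j : ℕ, j ≤ 3 → ContDiffOn ℝ ((3 - j : ℕ) : ℕ∞) (deriv^[j] g) (Set.Ioi 0) := by
      intro j
      induction j with
      | zero => intro _; exact hg_smooth
      | succ j ih =>
        intro hj
        have h1 := ih (by omega)
        rw [Function.iterate_succ_apply']
        refine h1.deriv_of_isOpen isOpen_Ioi ?_
        have : 3 - (j + 1) + 1 = 3 - j := by omega
        exact_mod_cast this.le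
    intro j hj τ hτ
    rw [Function.iterate_succ_apply']
    refine (((hiter j (by omega)).differentiableOn ?_).differentiableAt (Ioi_mem_nhds hτ)).hasDerivAt
    have : 3 - j ≠ 0 := by omega
    exact_mod_cast this
  have hc3 : ContinuousOn (deriv^[3] g) (Set.Ioi 0) := by
    have h1 := hg_smooth.deriv_of_isOpen (m := 2) isOpen_Ioi (by norm_num)
    have h2 := h1.deriv_of_isOpen (m := 1) isOpen_Ioi (by norm_num)
    have h3 := h2.deriv_of_isOpen (m := 0) isOpen_Ioi (by norm_num)
    exact h3.continuousOn
  have hgood : ∀ j : ℕ, j ≤ 3 → Good (deriv^[j] g) := by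
    intro j hj
    refine good_of_poly ?_ C p fun τ hτ => hCp τ hτ j hj
    rcases Nat.lt_or_ge j 3 with h | h
    · exact fun τ hτ => (hd j (by omega) τ hτ).continuousAt.continuousWithinAt
    · obtain rfl : j = 3 := by omega
      exact hc3
  have hgg : Good g := hgood 0 (by norm_num)
  have hFL : ∀ q : ℝ, 0 < q → F q = (q : ℂ) * Mom g 0 q := by
    intro q hq
    rw [hF q hq, Mom, Lap]; simp
  have hid : ∀ q : ℝ, HasDerivAt (fun x : ℝ => (x : ℂ)) 1 q := fun q =>
    Complex.ofRealCLM.hasDerivAt (x := q)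
  have hm : ∀ n : ℕ, ∀ q : ℝ, 0 < q → HasDerivAt (Mom g n) (-Mom g (n + 1) q) q :=
    fun n q hq => mom_hasDerivAt hgg n hq
  refine ⟨fun q hq => hgg.integrable hq, ?_, ?_⟩
  · rw [contDiffOn_infty]
    intro n
    refine ContDiffOn.congr (f := fun q : ℝ => (q : ℂ) * Lap g q) ?_ (fun q hq => hF q hq)
    exact (Complex.ofRealCLM.contDiff.contDiffOn).mul (hgg.contDiffOn n)
  intro q hq
  have e1 : ∀ q : ℝ, 0 < q → eulerOp F q = (q : ℂ) * Mom g 0 q - (q : ℂ) ^ 2 * Mom g 1 q := by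
    intro q hq
    rw [euler_eq hFL hq ((hid q).mul (hm 0 q hq))]
    ring
  have e2 : ∀ q : ℝ, 0 < q → eulerOp (eulerOp F) q
      = (q : ℂ) * Mom g 0 q - 3 * (q : ℂ) ^ 2 * Mom g 1 q + (q : ℂ) ^ 3 * Mom g 2 q := by
    intro q hq
    rw [euler_eq e1 hq (((hid q).mul (hm 0 q hq)).sub (((hid q).pow 2).mul (hm 1 q hq)))]
    norm_num
    ring
  have e3 : eulerOp (eulerOp (eulerOp F)) q
      = (q : ℂ) * Mom g 0 q - 7 * (q : ℂ) ^ 2 * Mom g 1 q + 6 * (q : ℂ) ^ 3 * Mom g 2 q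
        - (q : ℂ) ^ 4 * Mom g 3 q := by
    rw [euler_eq e2 hq ((((hid q).mul (hm 0 q hq)).sub
      ((((hid q).pow 2).const_mul 3).mul (hm 1 q hq))).add (((hid q).pow 3).mul (hm 2 q hq)))]
    norm_num
    ring
  have e4 : eulerOp (fun s => -2 * eulerOp F s - (2 * (lam : ℂ) + 1) * F s) q
      = -2 * ((q : ℂ) * Mom g 0 q - 3 * (q : ℂ) ^ 2 * Mom g 1 q + (q : ℂ) ^ 3 * Mom g 2 q)
        - (2 * (lam : ℂ) + 1) * ((q : ℂ) * Mom g 0 q - (q : ℂ) ^ 2 * Mom g 1 q) := by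
    rw [euler_eq (h := fun s : ℝ => -2 * ((s : ℂ) * Mom g 0 s - (s : ℂ) ^ 2 * Mom g 1 s)
        - (2 * (lam : ℂ) + 1) * ((s : ℂ) * Mom g 0 s))
      (fun s hs => by rw [e1 s hs, hFL s hs]) hq
      (((((hid q).mul (hm 0 q hq)).sub (((hid q).pow 2).mul (hm 1 q hq))).const_mul (-2)).sub
        (((hid q).mul (hm 0 q hq)).const_mul (2 * (lam : ℂ) + 1)))]
    norm_num
    ring
  have hI : ∀ (j : ℕ), j ≤ 3 → ∀ n : ℕ, Integrable (fun τ : ℝ =>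
      Complex.exp (-(q : ℂ) * (τ : ℂ)) * ((τ : ℂ) ^ n * deriv^[j] g τ))
      (volume.restrict (Set.Ioi 0)) := fun j hj n => ((hgood j hj).mul_pow n).integrable hq
  have hP : ∀ (j : ℕ), j ≤ 2 → ∀ n : ℕ, Mom (deriv^[j + 1] g) n q
      = (q : ℂ) * Mom (deriv^[j] g) n q - n * Mom (deriv^[j] g) (n - 1) q := fun j hj n =>
    mom_deriv (hgood j (by omega)) (hgood (j + 1) (by omega)) (hd j hj) (hg0 j (by omega)) n hq
  have hsum : Mom (deriv^[3] g) 3 q + 4 * Mom (deriv^[3] g) 2 q + 3 * Mom (deriv^[2] g) 2 q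
      + (10 - 8 * (lam : ℂ)) * Mom (deriv^[2] g) 1 q + Mom (deriv^[1] g) 1 q
      + (2 - 2 * (lam : ℂ)) * (1 - 2 * (lam : ℂ)) * Mom (deriv^[1] g) 0 q = 0 := by
    have i1 := hI 3 le_rfl 3
    have i2 := (hI 3 le_rfl 2).const_mul 4
    have i3 := (hI 2 (by norm_num) 2).const_mul 3
    have i4 := (hI 2 (by norm_num) 1).const_mul (10 - 8 * (lam : ℂ))
    have i5 := hI 1 (by norm_num) 1
    have i6 := (hI 1 (by norm_num) 0).const_mul ((2 - 2 * (lam : ℂ)) * (1 - 2 * (lam : ℂ)))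
    simp only [Mom, Lap]
    simp only [← integral_const_mul]
    rw [← integral_add' i1 i2, ← integral_add' (i1.add i2) i3, ← integral_add' ((i1.add i2).add i3) i4,
      ← integral_add' (((i1.add i2).add i3).add i4) i5,
      ← integral_add' ((((i1.add i2).add i3).add i4).add i5) i6]
    rw [setIntegral_congr_fun (g := fun _ => (0 : ℂ)) measurableSet_Ioi]
    · simp
    · intro τ hτ
      have := hode τ hτ
      simp only [Pi.add_apply, Function.iterate_one]
      linear_combination Complex.exp (-(q : ℂ) * (τ : ℂ)) * this
  rw [e3, e4, e1 q hq, hFL q hq]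
  have p2 := hP 2 le_rfl
  have p1 := hP 1 (by norm_num)
  have p0 := hP 0 (by norm_num)
  norm_num only [Function.iterate_zero, id] at p0 p1 p2
  simp only [p2, p1, p0] at hsum
  norm_num at hsum
  linear_combination (-(q : ℂ)) * hsum
end

section
/- Fix λ ∈ C. In the algebra A, for every integer n ≥ 1 and 1 ≤ l ≤ n the element H + l is a unit; set u_n = [∏_{l=0}^{2n−1}(−2(H+λ)−l)]·[∏_{l=1}^{n}(H+l)³]^{−1} ∈ A and u₀ = 1. Then: (i) the A-valued power series Σ_{n≥0} u_n qⁿ converges for every complex q; (ii) the A-valued function I(q) := exp(H·log q)·Σ_{n≥0} u_n qⁿ, defined for real q > 0, is infinitely differentiable and satisfies the Picard–Fuchs equation θ_q³ I(q) = q·(−2θ_q − 2λ)(−2θ_q − 2λ − 1) I(q) for all q > 0, where θ_q is the Euler operator θ_q I(q) = q·I′(q) acting on A-valued functions. -/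
/-- The Euler operator `θ f (q) = q · f′(q)` acting on functions of a real variable with
values in a normed space. -/
noncomputable def eulerOpA {A : Type*} [NormedAddCommGroup A] [NormedSpace ℝ A]
    (f : ℝ → A) : ℝ → A := fun q => q • deriv f q


section helpers

variable {A : Type*} [NormedCommRing A] [NormedAlgebra ℂ A]

/-- coefficients of an everywhere absolutely convergent series -/
def Rapid (v : ℕ → A) : Prop := ∀ r : ℝ, 0 ≤ r → Summable (fun n : ℕ => ‖v n‖ * r ^ n)

/-- the twisted series attached to `v` -/
noncomputable def FF (H : A) (v : ℕ → A) (q : ℝ) : A :=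
  NormedSpace.exp (((Real.log q : ℝ) : ℂ) • H) * ∑' n : ℕ, ((q : ℂ) ^ n) • v n

/-- the operator on coefficients corresponding to the Euler operator -/
def DD (H : A) (v : ℕ → A) (n : ℕ) : A := (H + (n : A)) * v n

lemma Rapid.summable [CompleteSpace A] {v : ℕ → A} (hv : Rapid v) (q : ℂ) :
    Summable (fun n : ℕ => (q ^ n) • v n) := by
  apply Summable.of_norm
  refine (hv ‖q‖ (norm_nonneg _)).congr fun n => ?_
  rw [norm_smul, norm_pow, mul_comm]

lemma Rapid.of_le {v w : ℕ → A} (hv : Rapid v) (C R : ℝ) (hR : 0 ≤ R)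
    (h : ∀ n, ‖w n‖ ≤ C * R ^ n * ‖v n‖) : Rapid w := by
  intro r hr
  refine Summable.of_nonneg_of_le (fun n => by positivity) (fun n => ?_)
    ((hv (R * r) (by positivity)).mul_left C)
  calc ‖w n‖ * r ^ n ≤ (C * R ^ n * ‖v n‖) * r ^ n := by
        gcongr
        exact h n
    _ = _ := by rw [mul_pow]; ring

lemma nat_le_two_pow_real (n : ℕ) : (n : ℝ) ≤ 2 ^ n := by
  exact_mod_cast (Nat.lt_two_pow_self (n := n)).le

lemma Rapid.nsmul {v : ℕ → A} (hv : Rapid v) : Rapid (fun n => (n : ℂ) • v n) := by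
  refine hv.of_le 1 2 (by norm_num) fun n => ?_
  rw [norm_smul]
  have := nat_le_two_pow_real n
  simp only [Complex.norm_natCast, one_mul]
  gcongr

lemma Rapid.mul {v : ℕ → A} (hv : Rapid v) (H : A) : Rapid (fun n => H * v n) := by
  refine hv.of_le ‖H‖ 1 (by norm_num) fun n => ?_
  simpa using norm_mul_le H (v n)

lemma Rapid.smul {v : ℕ → A} (hv : Rapid v) (a : ℂ) : Rapid (fun n => a • v n) := by
  refine hv.of_le ‖a‖ 1 (by norm_num) fun n => ?_
  rw [norm_smul]; simp

lemma Rapid.add {v w : ℕ → A} (hv : Rapid v) (hw : Rapid w) : Rapid (fun n => v n + w n) := by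
  intro r hr
  refine Summable.of_nonneg_of_le (fun n => by positivity) (fun n => ?_)
    ((hv r hr).add (hw r hr))
  rw [← add_mul]
  gcongr
  exact norm_add_le _ _

lemma DD_eq (H : A) (v : ℕ → A) : DD H v = fun n => H * v n + (n : ℂ) • v n := by
  funext n
  simp only [DD, add_mul, Algebra.smul_def, map_natCast]

lemma Rapid.DD {v : ℕ → A} (hv : Rapid v) (H : A) : Rapid (DD H v) := by
  rw [DD_eq]
  exact (hv.mul H).add hv.nsmul

variable [CompleteSpace A]

lemma FF_comb (H : A) {v w : ℕ → A} (hv : Rapid v) (hw : Rapid w) (a b : ℂ) (q : ℝ) :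
    FF H (fun n => a • v n - b • w n) q = a • FF H v q - b • FF H w q := by
  unfold FF
  have h1 := (hv.summable (q : ℂ)).const_smul a
  have h2 := (hw.summable (q : ℂ)).const_smul b
  rw [← mul_smul_comm, ← mul_smul_comm, ← mul_sub, ← (hv.summable (q : ℂ)).tsum_const_smul a,
    ← (hw.summable (q : ℂ)).tsum_const_smul b, ← h1.tsum_sub h2]
  congr 2
  funext n
  rw [smul_sub, smul_comm _ a, smul_comm _ b]

lemma hasDerivAt_series {v : ℕ → A} (hv : Rapid v) (q : ℝ) (hq : 0 < q) :
    HasDerivAt (fun s : ℝ => ∑' n : ℕ, ((s : ℂ) ^ n) • v n)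
      (((q : ℂ)⁻¹) • ∑' n : ℕ, ((q : ℂ) ^ n) • ((n : ℂ) • v n)) q := by
  have hqc : (q : ℂ) ≠ 0 := by exact_mod_cast hq.ne'
  have key := hasDerivAt_tsum_of_isPreconnected (𝕜 := ℝ)
    (g := fun (n : ℕ) (s : ℝ) => ((s : ℂ) ^ n) • v n)
    (g' := fun (n : ℕ) (s : ℝ) => ((n : ℂ) * (s : ℂ) ^ (n - 1)) • v n)
    (u := fun n : ℕ => ‖(n : ℂ) • v n‖ * (q + 1) ^ n) (t := Set.Ioo 0 (q + 1)) (y₀ := q) (y := q)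
    (hv.nsmul (q + 1) (by positivity)) isOpen_Ioo isPreconnected_Ioo ?_ ?_
    ⟨hq, by linarith⟩ (hv.summable _) ⟨hq, by linarith⟩
  · refine key.congr_deriv ?_
    symm
    rw [← (hv.nsmul.summable (q : ℂ)).tsum_const_smul]
    congr 1
    funext n
    rw [smul_smul, smul_smul]
    congr 1
    rcases n with _ | n
    · simp
    · rw [Nat.add_sub_cancel, pow_succ]
      field_simp
  · intro n y _
    have h := ((hasDerivAt_pow n (y : ℂ)).comp_ofReal).smul_const (v n)
    exact h
  · intro n y hy
    rw [norm_smul, norm_smul, norm_mul, norm_pow, Complex.norm_real, Real.norm_of_nonneg hy.1.le,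
      Complex.norm_natCast]
    have : y ^ (n - 1) ≤ (q + 1) ^ n :=
      calc y ^ (n - 1) ≤ (q + 1) ^ (n - 1) := by
            have := hy.1.le
            have := hy.2.le
            gcongr
        _ ≤ (q + 1) ^ n := pow_le_pow_right₀ (by linarith) (Nat.sub_le _ _)
    calc (n : ℝ) * y ^ (n - 1) * ‖v n‖ ≤ n * (q + 1) ^ n * ‖v n‖ := by gcongr
      _ = _ := by ring

lemma hasDerivAt_FF (H : A) {v : ℕ → A} (hv : Rapid v) (q : ℝ) (hq : 0 < q) :
    HasDerivAt (FF H v) (((q : ℂ)⁻¹) • FF H (DD H v) q) q := by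
  have h1 : HasDerivAt (fun s : ℝ => NormedSpace.exp (((Real.log s : ℝ) : ℂ) • H))
      (((q⁻¹ : ℝ) : ℂ) • (H * NormedSpace.exp (((Real.log q : ℝ) : ℂ) • H))) q :=
    HasDerivAt.scomp (h := fun s : ℝ => ((Real.log s : ℝ) : ℂ))
      (g₁ := fun z : ℂ => NormedSpace.exp (z • H)) q
      (hasDerivAt_exp_smul_const' (𝕂 := ℂ) H ((Real.log q : ℝ) : ℂ))
      (Real.hasDerivAt_log hq.ne').ofReal_comp
  have h2 := h1.mul (hasDerivAt_series hv q hq)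
  refine h2.congr_deriv ?_
  symm
  have e : ∑' n : ℕ, ((q : ℂ) ^ n) • DD H v n =
      H * ∑' n : ℕ, ((q : ℂ) ^ n) • v n + ∑' n : ℕ, ((q : ℂ) ^ n) • ((n : ℂ) • v n) := by
    rw [← (hv.summable (q : ℂ)).tsum_mul_left,
      ← ((hv.summable (q : ℂ)).mul_left H).tsum_add (hv.nsmul.summable (q : ℂ))]
    congr 1
    funext n
    rw [DD_eq, smul_add, mul_smul_comm]
  unfold FF
  rw [e, Complex.ofReal_inv, smul_mul_assoc, mul_smul_comm, ← smul_add]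
  congr 1
  ring

lemma eulerOpA_FF (H : A) {v : ℕ → A} (hv : Rapid v) {f : ℝ → A}
    (hf : ∀ q : ℝ, 0 < q → f q = FF H v q) (q : ℝ) (hq : 0 < q) :
    eulerOpA f q = FF H (DD H v) q := by
  have hqc : (q : ℂ) ≠ 0 := by exact_mod_cast hq.ne'
  have : f =ᶠ[nhds q] FF H v := by
    filter_upwards [Ioi_mem_nhds hq] with s hs using hf s hs
  rw [eulerOpA, this.deriv_eq, (hasDerivAt_FF H hv q hq).deriv, ← Complex.coe_smul, smul_smul,
    mul_inv_cancel₀ hqc, one_smul]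

lemma contDiffOn_FF (H : A) (n : ℕ) : ∀ {v : ℕ → A}, Rapid v →
    ContDiffOn ℝ n (FF H v) (Set.Ioi 0) := by
  induction n with
  | zero =>
    intro v hv
    rw [Nat.cast_zero, contDiffOn_zero]
    exact fun q hq => (hasDerivAt_FF H hv q hq).continuousAt.continuousWithinAt
  | succ n ih =>
    intro v hv
    rw [Nat.cast_succ, contDiffOn_succ_iff_deriv_of_isOpen isOpen_Ioi]
    refine ⟨fun q hq => (hasDerivAt_FF H hv q hq).differentiableAt.differentiableWithinAt,
      fun h => absurd h (by simp), ?_⟩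
    have h1 : ContDiffOn ℝ n (fun q : ℝ => q⁻¹ • FF H (DD H v) q) (Set.Ioi 0) :=
by
      have h0 : ContDiffOn ℝ n (fun q : ℝ => q⁻¹) (Set.Ioi 0) :=
        contDiffOn_id.inv fun q hq => ne_of_gt hq
      exact ContDiffOn.smul (𝕜' := ℝ) h0 (ih (hv.DD H))
    refine h1.congr fun q hq => ?_
    rw [(hasDerivAt_FF H hv q hq).deriv, ← Complex.ofReal_inv, Complex.coe_smul]

lemma winv_mul (H : A) (hH : H ^ 3 = 0) (m : ℕ) (hm : m ≠ 0) :
    (H + (m : A)) * ((m : ℂ)⁻¹ • (1 : A) - ((m : ℂ)⁻¹) ^ 2 • H + ((m : ℂ)⁻¹) ^ 3 • H ^ 2) = 1 := by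
  have hmc : (m : ℂ) ≠ 0 := by exact_mod_cast hm
  have h : (m : A) * algebraMap ℂ A ((m : ℂ)⁻¹) = 1 := by
    rw [← map_natCast (algebraMap ℂ A), ← map_mul, mul_inv_cancel₀ hmc, map_one]
  simp only [Algebra.smul_def, map_pow]
  set c := algebraMap ℂ A ((m : ℂ)⁻¹)
  linear_combination (1 - c * H + c ^ 2 * H ^ 2) * h + c ^ 3 * hH

lemma isUnit_H (H : A) (hH : H ^ 3 = 0) (m : ℕ) (hm : m ≠ 0) : IsUnit (H + (m : A)) :=
  IsUnit.of_mul_eq_one _ (winv_mul H hH m hm)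

lemma rapid_of_rec (H : A) (hH : H ^ 3 = 0) (a : A) (u : ℕ → A)
    (hrec : ∀ n : ℕ, (H + ((n + 1 : ℕ) : A)) ^ 3 * u (n + 1) =
      (a - ((2 * n : ℕ) : A)) * (a - ((2 * n + 1 : ℕ) : A)) * u n) : Rapid u := by
  obtain ⟨C, hC⟩ : ∃ C : ℝ, C = ‖(1 : A)‖ + ‖H‖ + ‖H ^ 2‖ := ⟨_, rfl⟩
  obtain ⟨B, hB⟩ : ∃ B : ℝ, B = ‖a‖ + 2 * ‖(1 : A)‖ := ⟨_, rfl⟩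
  have hC0 : 0 ≤ C := by rw [hC]; positivity
  have hB0 : 0 ≤ B := by rw [hB]; positivity
  have hbound : ∀ n : ℕ, ‖u (n + 1)‖ ≤ C ^ 3 * B ^ 2 / ((n : ℝ) + 1) * ‖u n‖ := by
    intro n
    have hw := winv_mul H hH (n + 1) (Nat.succ_ne_zero n)
    set w := (((n + 1 : ℕ) : ℂ)⁻¹ • (1 : A) - (((n + 1 : ℕ) : ℂ)⁻¹) ^ 2 • H
      + (((n + 1 : ℕ) : ℂ)⁻¹) ^ 3 • H ^ 2) with hwdef
    have hn1 : (1 : ℝ) ≤ (n : ℝ) + 1 := by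
      have : (0 : ℝ) ≤ n := Nat.cast_nonneg n
      linarith
    have hx0 : (0 : ℝ) ≤ ((n : ℝ) + 1)⁻¹ := by positivity
    have hx1 : ((n : ℝ) + 1)⁻¹ ≤ 1 := inv_le_one_of_one_le₀ hn1
    have hnw : ‖w‖ ≤ C * ((n : ℝ) + 1)⁻¹ := by
      have hc : ‖(((n + 1 : ℕ) : ℂ))⁻¹‖ = ((n : ℝ) + 1)⁻¹ := by
        rw [norm_inv, Complex.norm_natCast]; push_cast; rfl
      have e1 := norm_add_le (((n + 1 : ℕ) : ℂ)⁻¹ • (1 : A) - (((n + 1 : ℕ) : ℂ)⁻¹) ^ 2 • H)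
        ((((n + 1 : ℕ) : ℂ)⁻¹) ^ 3 • H ^ 2)
      have e2 := norm_sub_le (((n + 1 : ℕ) : ℂ)⁻¹ • (1 : A)) ((((n + 1 : ℕ) : ℂ)⁻¹) ^ 2 • H)
      simp only [norm_smul, norm_pow, hc] at e1 e2
      have p2 : (((n : ℝ) + 1)⁻¹) ^ 2 ≤ ((n : ℝ) + 1)⁻¹ := pow_le_of_le_one hx0 hx1 (by norm_num)
      have p3 : (((n : ℝ) + 1)⁻¹) ^ 3 ≤ ((n : ℝ) + 1)⁻¹ := pow_le_of_le_one hx0 hx1 (by norm_num)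
      have q2 := mul_le_mul_of_nonneg_right p2 (norm_nonneg H)
      have q3 := mul_le_mul_of_nonneg_right p3 (norm_nonneg (H ^ 2))
      rw [hwdef, hC]
      linarith
    have hu1 : u (n + 1) = w * (w * (w * ((a - ((2 * n : ℕ) : A)) *
        ((a - ((2 * n + 1 : ℕ) : A)) * u n)))) := by
      have h3 := hrec n
      set y := H + ((n + 1 : ℕ) : A)
      have h4 : (y * w) ^ 3 = 1 := by rw [hw, one_pow]
      linear_combination (-u (n + 1)) * h4 + w ^ 3 * h3
    have b1 : ∀ k : ℕ, k ≤ 2 * n + 2 → ‖a - (k : A)‖ ≤ B * ((n : ℝ) + 1) := by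
      intro k hk
      have t1 := norm_sub_le a (k : A)
      have t2 := Nat.norm_cast_le (α := A) k
      have t3 : (k : ℝ) ≤ 2 * n + 2 := by exact_mod_cast hk
      have t4 := mul_le_mul_of_nonneg_right t3 (norm_nonneg (1 : A))
      have t5 := mul_le_mul_of_nonneg_left hn1 (norm_nonneg a)
      rw [hB]
      linarith
    have c1 := b1 (2 * n) (by omega)
    have c2 := b1 (2 * n + 1) (by omega)
    rw [hu1]
    calc _ ≤ ‖w‖ * (‖w‖ * (‖w‖ * (‖a - ((2 * n : ℕ) : A)‖ *
        (‖a - ((2 * n + 1 : ℕ) : A)‖ * ‖u n‖)))) := by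
          refine (norm_mul_le _ _).trans ?_
          gcongr
          refine (norm_mul_le _ _).trans ?_
          gcongr
          refine (norm_mul_le _ _).trans ?_
          gcongr
          refine (norm_mul_le _ _).trans ?_
          gcongr
          exact norm_mul_le _ _
      _ ≤ (C * ((n : ℝ) + 1)⁻¹) * ((C * ((n : ℝ) + 1)⁻¹) * ((C * ((n : ℝ) + 1)⁻¹) *
          ((B * ((n : ℝ) + 1)) * ((B * ((n : ℝ) + 1)) * ‖u n‖)))) := by
          gcongr
      _ = _ := by field_simp
  intro r hr
  refine summable_of_ratio_norm_eventually_le (r := 1 / 2) (by norm_num) ?_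
  obtain ⟨N, hN⟩ := exists_nat_ge (2 * (C ^ 3 * B ^ 2 * r))
  filter_upwards [Filter.eventually_ge_atTop N] with n hn
  have hn' : (N : ℝ) ≤ n := by exact_mod_cast hn
  have hn0 : (0 : ℝ) < (n : ℝ) + 1 := by positivity
  rw [Real.norm_of_nonneg (by positivity), Real.norm_of_nonneg (by positivity)]
  have k1 : C ^ 3 * B ^ 2 / ((n : ℝ) + 1) * r ≤ 1 / 2 := by
    rw [div_mul_eq_mul_div, div_le_iff₀ hn0]
    linarith
  calc ‖u (n + 1)‖ * r ^ (n + 1)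
      ≤ (C ^ 3 * B ^ 2 / ((n : ℝ) + 1) * ‖u n‖) * r ^ (n + 1) := by
        gcongr
        exact hbound n
    _ = (C ^ 3 * B ^ 2 / ((n : ℝ) + 1) * r) * (‖u n‖ * r ^ n) := by rw [pow_succ]; ring
    _ ≤ _ := by gcongr

end helpers

/-- Let `A = ℂ[X]/(X³)` (formalized as a complete normed commutative
`ℂ`-algebra with an element `H` satisfying `H³ = 0` and `1, H, H²` linearly independent).
Then: every `H + l` (`1 ≤ l ≤ n`) is a unit; with
`u_n = [∏_{l=0}^{2n−1}(−2(H+λ)−l)]·[∏_{l=1}^{n}(H+l)³]⁻¹` the series `Σ u_n qⁿ` converges for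
every complex `q`; and `I(q) = exp(H·log q)·Σ_{n≥0} u_n qⁿ` is smooth on `(0,∞)` and satisfies
the Picard–Fuchs equation `θ_q³ I = q·(−2θ_q−2λ)(−2θ_q−2λ−1) I` there. -/
theorem stmt_7 {A : Type*} [NormedCommRing A] [NormedAlgebra ℂ A] [CompleteSpace A]
    (H : A) (hH : H ^ 3 = 0) (hbasis : LinearIndependent ℂ ![1, H, H ^ 2])
    (lam : ℂ)
    (u : ℕ → A)
    (hu : ∀ n : ℕ, u n =
      (∏ l ∈ Finset.range (2 * n), (-2 * (H + algebraMap ℂ A lam) - (l : A))) *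
        Ring.inverse (∏ l ∈ Finset.range n, (H + ((l : A) + 1)) ^ 3))
    (I : ℝ → A)
    (hI : ∀ q : ℝ, 0 < q →
      I q = NormedSpace.exp (((Real.log q : ℝ) : ℂ) • H) * ∑' n : ℕ, ((q : ℂ) ^ n) • u n) :
    (∀ n l : ℕ, 1 ≤ l → l ≤ n → IsUnit (H + (l : A))) ∧
    (∀ q : ℂ, Summable (fun n : ℕ => (q ^ n) • u n)) ∧
    ContDiffOn ℝ (⊤ : ℕ∞) I (Set.Ioi 0) ∧
    ∀ q : ℝ, 0 < q →
      eulerOpA (eulerOpA (eulerOpA I)) q =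
        q • ((-2 : ℂ) • eulerOpA
              (fun s => (-2 : ℂ) • eulerOpA I s - (2 * lam + 1) • I s) q
          - (2 * lam) • ((-2 : ℂ) • eulerOpA I q - (2 * lam + 1) • I q)) := by
  have hprod : ∀ n : ℕ, IsUnit (∏ l ∈ Finset.range n, (H + ((l : A) + 1)) ^ 3) := by
    intro n
    rw [IsUnit.prod_iff]
    intro l _
    have := isUnit_H H hH (l + 1) (Nat.succ_ne_zero l)
    push_cast at this
    exact this.pow 3
  have hrec : ∀ n : ℕ, (H + ((n + 1 : ℕ) : A)) ^ 3 * u (n + 1) =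
      (-2 * (H + algebraMap ℂ A lam) - ((2 * n : ℕ) : A)) *
      (-2 * (H + algebraMap ℂ A lam) - ((2 * n + 1 : ℕ) : A)) * u n := by
    intro n
    have h1 := Ring.mul_inverse_cancel _ (hprod n)
    have h2 := Ring.mul_inverse_cancel _ (hprod (n + 1))
    rw [hu n, hu (n + 1), show 2 * (n + 1) = 2 * n + 1 + 1 by ring, Finset.prod_range_succ,
      Finset.prod_range_succ]
    rw [Finset.prod_range_succ] at h2 ⊢
    set P := ∏ l ∈ Finset.range n, (H + ((l : A) + 1)) ^ 3
    set Q := ∏ l ∈ Finset.range (2 * n), (-2 * (H + algebraMap ℂ A lam) - (l : A))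
    set J := Ring.inverse P
    set K := Ring.inverse (P * (H + ((n : A) + 1)) ^ 3)
    rw [Nat.cast_succ n]
    set y := (H + ((n : A) + 1)) ^ 3
    set s := -2 * (H + algebraMap ℂ A lam) - ((2 * n : ℕ) : A)
    set t := -2 * (H + algebraMap ℂ A lam) - ((2 * n + 1 : ℕ) : A)
    linear_combination (Q * s * t * J) * h2 - (Q * s * t * y * K) * h1
  have hR : Rapid u := rapid_of_rec H hH _ u hrec
  have hIF : ∀ q : ℝ, 0 < q → I q = FF H u q := hI
  refine ⟨fun n l hl _ => isUnit_H H hH l (by omega), hR.summable, ?_, ?_⟩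
  · exact contDiffOn_infty.2 fun n => (contDiffOn_FF H n hR).congr fun q hq => hIF q hq
  intro q hq
  have E1 := eulerOpA_FF H hR hIF
  have E2 := eulerOpA_FF H (hR.DD H) E1
  have E3 := eulerOpA_FF H ((hR.DD H).DD H) E2
  have hV : Rapid (fun n => (-2 : ℂ) • DD H u n - (2 * lam + 1) • u n) := by
    simpa only [sub_eq_add_neg, neg_smul] using
      ((hR.DD H).smul (-2)).add (hR.smul (-(2 * lam + 1)))
  have G1 : ∀ s : ℝ, 0 < s → (-2 : ℂ) • eulerOpA I s - (2 * lam + 1) • I s =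
      FF H (fun n => (-2 : ℂ) • DD H u n - (2 * lam + 1) • u n) s := by
    intro s hs
    rw [FF_comb H (hR.DD H) hR, E1 s hs, hIF s hs]
  rw [E3 q hq, eulerOpA_FF H hV G1 q hq, G1 q hq, ← FF_comb H (hV.DD H) hV]
  have hS := ((hR.DD H).DD H).DD H
  unfold FF
  rw [← mul_smul_comm, (hS.summable (q : ℂ)).tsum_eq_zero_add]
  congr 1
  have z : DD H (DD H (DD H u)) 0 = 0 := by
    simp only [DD, Nat.cast_zero, add_zero]
    linear_combination u 0 * hH
  rw [z, smul_zero, zero_add, ← Complex.coe_smul, ← Summable.tsum_const_smul]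
  · congr 1
    funext n
    rw [pow_succ', smul_smul]
    congr 1
    have h := hrec n
    simp only [DD, Algebra.smul_def, map_add, map_mul, map_neg, map_one, map_ofNat]
    push_cast at h ⊢
    linear_combination h
  · have hW : Rapid (fun n => (-2 : ℂ) • DD H (fun n => (-2 : ℂ) • DD H u n
        - (2 * lam + 1) • u n) n - (2 * lam) • ((-2 : ℂ) • DD H u n - (2 * lam + 1) • u n)) := by
      simpa only [sub_eq_add_neg, neg_smul] using
        ((hV.DD H).smul (-2)).add (hV.smul (-(2 * lam)))
    exact hW.summable _
end

section
/- For every real τ with 0 < τ < R, the series Σ_{k₀≥0} |A_{k₀}| · τ^{r·k₀/d} converges. In particular, the regularized I-function I^{reg}(τ) = Σ_{k₀≥0} A_{k₀} τ^{r(k₀/d+λ)} converges absolutely for all τ ∈ (0, R). -/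
theorem aux_gamma_up (x : ℝ) (n : ℕ) (h : ∀ i : ℕ, x + i ≠ 0) :
    Real.Gamma (x + n) = (∏ i ∈ Finset.range n, (x + i)) * Real.Gamma x := by
  induction n with
  | zero => simp
  | succ n ih =>
    rw [Finset.prod_range_succ, Nat.cast_succ, ← add_assoc, Real.Gamma_add_one (h n), ih]
    ring

theorem aux_lin (α β : ℝ) :
    Filter.Tendsto (fun k : ℕ => (α * (k : ℝ) + β) / (k : ℝ)) Filter.atTop (nhds α) := by
  have h1 : Filter.Tendsto (fun k : ℕ => α + β / (k : ℝ)) Filter.atTop (nhds (α + 0)) :=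
    tendsto_const_nhds.add (tendsto_const_div_atTop_nhds_zero_nat β)
  rw [add_zero] at h1
  refine h1.congr' ?_
  filter_upwards [Filter.eventually_gt_atTop 0] with k hk
  have : (k : ℝ) ≠ 0 := by positivity
  field_simp

theorem aux_prod (α : ℝ) (β : ℕ → ℝ) (n : ℕ) :
    Filter.Tendsto (fun k : ℕ => (∏ i ∈ Finset.range n, (α * (k : ℝ) + β i)) / (k : ℝ) ^ n)
      Filter.atTop (nhds (α ^ n)) := by
  have h := tendsto_finsetProd (Finset.range n) (fun i _ => aux_lin α (β i))
  simp only [Finset.prod_div_distrib, Finset.prod_const, Finset.card_range] at h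
  exact h

theorem aux_summable (f : ℕ → ℝ) (d : ℕ) (hd : 0 < d) (hf : ∀ k, 0 < f k) (L : ℝ) (hL : L < 1)
    (h : Filter.Tendsto (fun k => f (k + d) / f k) Filter.atTop (nhds L)) : Summable f := by
  haveI : NeZero d := ⟨hd.ne'⟩
  have key : ∀ i : ℕ, Summable (fun n : ℕ => f (n * d + i)) := by
    intro i
    refine summable_of_ratio_test_tendsto_lt_one hL
      (Filter.Eventually.of_forall fun n => (hf _).ne') ?_
    have ht : Filter.Tendsto (fun n : ℕ => n * d + i) Filter.atTop Filter.atTop := by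
      refine Filter.tendsto_atTop_mono (fun n => ?_) Filter.tendsto_id
      have : n * 1 ≤ n * d := Nat.mul_le_mul_left n hd
      simp only [id]
      omega
    refine (h.comp ht).congr fun n => ?_
    simp only [Function.comp, Real.norm_eq_abs, abs_of_pos (hf _)]
    congr 2
    ring
  have e := ((Equiv.prodComm (Fin d) ℕ).trans (Nat.divModEquiv d).symm).summable_iff (f := f)
  rw [← e]
  refine (summable_prod_of_nonneg (fun _ => (hf _).le)).2 ?_
  refine ⟨fun i => ?_, Summable.of_finite⟩
  refine (key i).congr fun n => ?_
  simp [Nat.divModEquiv]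

/-- Setup: `N ≥ 1`, positive integers `c₁,…,c_N` and `d` with `c_j ∣ d`,
`r = Σ c_j − d > 0`, nonnegative rationals `a^j`, and a positive irrational real `λ`.  With
`A_{k₀} = [1/(Γ(1+r(k₀/d+λ))·k₀!)]·∏_j Γ(1−c_jλ−⟨k₀q_j+a^j⟩)/Γ(1−c_jλ−k₀q_j−a^j)` and
`R = (r^r·d^d·∏_j c_j^{−c_j})^{1/r}`, for every `0 < τ < R` the series
`Σ_{k₀≥0} |A_{k₀}|·τ^{r·k₀/d}` converges; in particular the regularized `I`-function
`I^{reg}(τ) = Σ_{k₀} A_{k₀} τ^{r(k₀/d+λ)}` converges absolutely on `(0, R)`. -/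
theorem stmt_9 (N : ℕ) (hN : 1 ≤ N) (c : Fin N → ℕ) (d r : ℕ)
    (hc : ∀ j, 0 < c j) (hd : 0 < d) (hdvd : ∀ j, c j ∣ d)
    (hr : 0 < r) (hrsum : (∑ j, c j) = d + r)
    (a : Fin N → ℚ) (ha : ∀ j, 0 ≤ a j)
    (lam : ℝ) (hpos : 0 < lam) (hirr : Irrational lam)
    (A : ℕ → ℝ)
    (hA : ∀ k₀ : ℕ, A k₀ =
      (1 / (Real.Gamma (1 + (r : ℝ) * ((k₀ : ℝ) / (d : ℝ) + lam)) * (k₀.factorial : ℝ))) *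
        ∏ j, Real.Gamma (1 - (c j : ℝ) * lam -
              Int.fract ((k₀ : ℝ) * ((c j : ℝ) / (d : ℝ)) + (a j : ℝ))) /
          Real.Gamma (1 - (c j : ℝ) * lam - (k₀ : ℝ) * ((c j : ℝ) / (d : ℝ)) - (a j : ℝ)))
    (R : ℝ)
    (hR : R = ((r : ℝ) ^ (r : ℝ) * (d : ℝ) ^ (d : ℝ) *
      ∏ j, (c j : ℝ) ^ (-(c j : ℝ))) ^ ((1 : ℝ) / (r : ℝ)))
    (τ : ℝ) (hτ0 : 0 < τ) (hτR : τ < R) :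
    Summable (fun k₀ : ℕ => |A k₀| * τ ^ ((r : ℝ) * (k₀ : ℝ) / (d : ℝ))) ∧
    Summable (fun k₀ : ℕ => |A k₀ * τ ^ ((r : ℝ) * ((k₀ : ℝ) / (d : ℝ) + lam))|) := by
  have hdR : (0 : ℝ) < d := by exact_mod_cast hd
  have hrR : (0 : ℝ) < r := by exact_mod_cast hr
  have hcR : ∀ j, (0 : ℝ) < c j := fun j => by exact_mod_cast hc j
  have hirrG : ∀ j, ∀ q : ℚ, Real.Gamma ((q : ℝ) - (c j : ℝ) * lam) ≠ 0 := by
    intro j q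
    have hi := (hirr.natCast_mul (hc j).ne').ratCast_sub q
    refine Real.Gamma_ne_zero fun m hm => ?_
    exact hi ⟨-(m : ℚ), by rw [hm]; push_cast; rfl⟩
  have hG1 : ∀ (k : ℕ) j, Real.Gamma (1 - (c j : ℝ) * lam -
              Int.fract ((k : ℝ) * ((c j : ℝ) / (d : ℝ)) + (a j : ℝ))) ≠ 0 := by
    intro k j
    have := hirrG j (1 - Int.fract ((k : ℚ) * ((c j : ℚ) / (d : ℚ)) + a j))
    push_cast at this
    convert this using 2
    ring
  have hG2 : ∀ (k : ℕ) j, Real.Gamma (1 - (c j : ℝ) * lam - (k : ℝ) * ((c j : ℝ) / (d : ℝ))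
      - (a j : ℝ)) ≠ 0 := by
    intro k j
    have := hirrG j (1 - (k : ℚ) * ((c j : ℚ) / (d : ℚ)) - a j)
    push_cast at this
    convert this using 2
    ring
  have hG0 : ∀ k : ℕ, 0 < Real.Gamma (1 + (r : ℝ) * ((k : ℝ) / (d : ℝ) + lam)) :=
    fun k => Real.Gamma_pos_of_pos (by positivity)
  have hAne : ∀ k, A k ≠ 0 := by
    intro k
    rw [hA]
    refine mul_ne_zero (one_div_ne_zero (mul_ne_zero (hG0 k).ne' (by positivity))) ?_
    exact Finset.prod_ne_zero_iff.2 fun j _ => div_ne_zero (hG1 k j) (hG2 k j)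
  set f : ℕ → ℝ := fun k₀ : ℕ => |A k₀| * τ ^ ((r : ℝ) * (k₀ : ℝ) / (d : ℝ)) with hf
  have hfpos : ∀ k, 0 < f k := fun k =>
    mul_pos (abs_pos.2 (hAne k)) (Real.rpow_pos_of_pos hτ0 _)
  -- recursion for A
  have hrec : ∀ k : ℕ, |A (k + d)| * ((∏ i ∈ Finset.range r, ((r / d : ℝ) * k + (1 + r * lam + i))) *
      (∏ i ∈ Finset.range d, ((1 : ℝ) * k + (1 + i)))) =
      |A k| * ∏ j, ∏ i ∈ Finset.range (c j),
        ((c j / d : ℝ) * k + (c j * lam + a j + i)) := by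
    intro k
    have e1 : Real.Gamma (1 + (r : ℝ) * (((k + d : ℕ) : ℝ) / (d : ℝ) + lam)) =
        (∏ i ∈ Finset.range r, ((r / d : ℝ) * k + (1 + r * lam + i))) *
          Real.Gamma (1 + (r : ℝ) * ((k : ℝ) / (d : ℝ) + lam)) := by
      have := aux_gamma_up (1 + (r : ℝ) * ((k : ℝ) / (d : ℝ) + lam)) r
        (fun i => by positivity)
      rw [show 1 + (r : ℝ) * (((k + d : ℕ) : ℝ) / (d : ℝ) + lam) =
        1 + (r : ℝ) * ((k : ℝ) / (d : ℝ) + lam) + r by push_cast; field_simp; ring, this]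
      congr 1
      refine Finset.prod_congr rfl fun i _ => ?_
      ring
    have e2 : (((k + d).factorial : ℕ) : ℝ) =
        (∏ i ∈ Finset.range d, ((1 : ℝ) * k + (1 + i))) * (k.factorial : ℝ) := by
      have := aux_gamma_up ((k : ℝ) + 1) d (fun i => by positivity)
      rw [Real.Gamma_nat_eq_factorial] at this
      rw [← Real.Gamma_nat_eq_factorial, show (((k + d : ℕ) : ℝ) + 1) = (k : ℝ) + 1 + d by
        push_cast; ring, this]
      congr 1
      refine Finset.prod_congr rfl fun i _ => ?_
      ring
    have e3 : ∀ j, |Real.Gamma (1 - (c j : ℝ) * lam -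
              Int.fract (((k + d : ℕ) : ℝ) * ((c j : ℝ) / (d : ℝ)) + (a j : ℝ))) /
          Real.Gamma (1 - (c j : ℝ) * lam - ((k + d : ℕ) : ℝ) * ((c j : ℝ) / (d : ℝ)) - (a j : ℝ))|
        = |Real.Gamma (1 - (c j : ℝ) * lam -
              Int.fract ((k : ℝ) * ((c j : ℝ) / (d : ℝ)) + (a j : ℝ))) /
          Real.Gamma (1 - (c j : ℝ) * lam - (k : ℝ) * ((c j : ℝ) / (d : ℝ)) - (a j : ℝ))| *
          ∏ i ∈ Finset.range (c j), ((c j / d : ℝ) * k + (c j * lam + a j + i)) := by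
      intro j
      have h1 : ((k + d : ℕ) : ℝ) * ((c j : ℝ) / (d : ℝ)) + (a j : ℝ) =
          (k : ℝ) * ((c j : ℝ) / (d : ℝ)) + (a j : ℝ) + (c j : ℕ) := by
        push_cast; field_simp; ring
      rw [h1, Int.fract_add_natCast]
      set y := 1 - (c j : ℝ) * lam - ((k + d : ℕ) : ℝ) * ((c j : ℝ) / (d : ℝ)) - (a j : ℝ) with hy
      have hy' : 1 - (c j : ℝ) * lam - (k : ℝ) * ((c j : ℝ) / (d : ℝ)) - (a j : ℝ) = y + c j := by
        rw [hy]; push_cast; field_simp; ring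
      have hyne : ∀ i : ℕ, y + i ≠ 0 := by
        intro i hi
        have hi' := (hirr.natCast_mul (hc j).ne').ratCast_sub
          (1 - ((k : ℚ) + d) * ((c j : ℚ) / (d : ℚ)) - a j + i)
        refine hi' ⟨0, ?_⟩
        rw [Rat.cast_zero, ← hi, hy]
        push_cast
        ring
      have hup := aux_gamma_up y (c j) hyne
      have hP : ∏ i ∈ Finset.range (c j), ((c j / d : ℝ) * k + (c j * lam + a j + i)) =
          |∏ i ∈ Finset.range (c j), (y + i)| := by
        rw [Finset.abs_prod, ← Finset.prod_range_reflect]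
        refine Finset.prod_congr rfl fun i hi => ?_
        have hi := Finset.mem_range.1 hi
        have hcast : ((c j - 1 - i : ℕ) : ℝ) = (c j : ℝ) - 1 - i := by
          rw [Nat.sub_sub, Nat.cast_sub (by omega)]; push_cast; ring
        have haj : (0 : ℝ) ≤ a j := by exact_mod_cast ha j
        have hnn : 0 ≤ (c j / d : ℝ) * k + (c j * lam + a j + ((c j - 1 - i : ℕ) : ℝ)) := by
          positivity
        have : y + i = -((c j / d : ℝ) * k + (c j * lam + a j + ((c j - 1 - i : ℕ) : ℝ))) := by
          rw [hcast, hy]; push_cast; field_simp; ring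
        rw [this, abs_neg, abs_of_nonneg hnn]
      have hne1 : Real.Gamma (y + c j) ≠ 0 := by rw [← hy']; exact hG2 k j
      rw [hy', hP, hup, abs_div, abs_div, abs_mul]
      rw [hup] at hne1
      have h3 := abs_pos.2 (left_ne_zero_of_mul hne1)
      have h4 := abs_pos.2 (right_ne_zero_of_mul hne1)
      field_simp
    rw [hA, hA, abs_mul, abs_mul, Finset.abs_prod, Finset.abs_prod,
      Finset.prod_congr rfl (fun j _ => e3 j), Finset.prod_mul_distrib, e1, e2]
    have p1 : 0 < ∏ i ∈ Finset.range r, ((r / d : ℝ) * k + (1 + r * lam + i)) :=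
      Finset.prod_pos fun i _ => by positivity
    have p2 : 0 < ∏ i ∈ Finset.range d, ((1 : ℝ) * k + (1 + i)) :=
      Finset.prod_pos fun i _ => by positivity
    have p3 : (0 : ℝ) < k.factorial := by positivity
    have p4 := hG0 k
    rw [abs_of_pos (by positivity), abs_of_pos (by positivity)]
    field_simp
  have hsum : Summable f := by
    refine aux_summable f d hd hfpos
      (τ ^ r * ((∏ j, (c j / d : ℝ) ^ (c j)) / ((r / d : ℝ) ^ r * 1 ^ d))) ?_ ?_
    · have hRr : R ^ r = (r : ℝ) ^ r * (d : ℝ) ^ d * ∏ j, ((c j : ℝ) ^ (c j))⁻¹ := by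
        rw [hR, ← Real.rpow_natCast, ← Real.rpow_mul, one_div_mul_cancel hrR.ne', Real.rpow_one,
          Real.rpow_natCast, Real.rpow_natCast]
        · congr 1
          refine Finset.prod_congr rfl fun j _ => ?_
          rw [Real.rpow_neg (hcR j).le, Real.rpow_natCast]
        · have : 0 ≤ ∏ j, (c j : ℝ) ^ (-(c j : ℝ)) :=
            Finset.prod_nonneg fun j _ => by positivity
          positivity
      have hlt : τ ^ r < R ^ r := pow_lt_pow_left₀ hτR hτ0.le hr.ne'
      rw [hRr, Finset.prod_inv_distrib] at hlt
      have hQ : 0 < ∏ j, (c j : ℝ) ^ (c j) := Finset.prod_pos fun j _ => pow_pos (hcR j) _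
      have hq : ∏ j, (c j / d : ℝ) ^ (c j) = (∏ j, (c j : ℝ) ^ (c j)) / d ^ (d + r) := by
        simp only [div_pow, Finset.prod_div_distrib, Finset.prod_pow_eq_pow_sum, hrsum]
      rw [hq, pow_add, one_pow, mul_one, div_pow]
      set Q := ∏ j, (c j : ℝ) ^ (c j)
      have : τ ^ r * (Q / ((d : ℝ) ^ d * d ^ r) / ((r : ℝ) ^ r / d ^ r)) =
          τ ^ r / ((r : ℝ) ^ r * d ^ d * Q⁻¹) := by
        field_simp
      rw [this, div_lt_one (by positivity)]
      exact hlt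
    · have t1 := aux_prod (r / d : ℝ) (fun i => 1 + r * lam + i) r
      have t2 := aux_prod (1 : ℝ) (fun i => 1 + i) d
      have t3 := tendsto_finsetProd (Finset.univ : Finset (Fin N))
        (fun j _ => aux_prod (c j / d : ℝ) (fun i => c j * lam + a j + i) (c j))
      have t := (t3.div (t1.mul t2) (by positivity)).const_mul (τ ^ r)
      refine t.congr' ?_
      filter_upwards [Filter.eventually_gt_atTop 0] with k hk
      have hkR : (0 : ℝ) < k := by exact_mod_cast hk
      have hk' := hrec k
      have p1 : 0 < ∏ i ∈ Finset.range r, ((r / d : ℝ) * k + (1 + r * lam + i)) :=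
        Finset.prod_pos fun i _ => by positivity
      have p2 : 0 < ∏ i ∈ Finset.range d, ((1 : ℝ) * k + (1 + i)) :=
        Finset.prod_pos fun i _ => by positivity
      have p3 := abs_pos.2 (hAne k)
      have hτ : τ ^ ((r : ℝ) * ((k + d : ℕ) : ℝ) / (d : ℝ)) =
          τ ^ ((r : ℝ) * (k : ℝ) / (d : ℝ)) * τ ^ r := by
        rw [← Real.rpow_natCast τ r, ← Real.rpow_add hτ0]
        congr 1
        push_cast
        field_simp
      have p4 : 0 < τ ^ ((r : ℝ) * (k : ℝ) / (d : ℝ)) := Real.rpow_pos_of_pos hτ0 _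
      simp only [hf, Pi.div_apply, Finset.prod_div_distrib, Finset.prod_pow_eq_pow_sum, hrsum, hτ]
      set X := ∏ i ∈ Finset.range r, ((r / d : ℝ) * k + (1 + r * lam + i))
      set Y := ∏ i ∈ Finset.range d, ((1 : ℝ) * k + (1 + i))
      set Z := ∏ j, ∏ i ∈ Finset.range (c j), ((c j / d : ℝ) * k + (c j * lam + a j + i))
      set T := τ ^ ((r : ℝ) * (k : ℝ) / (d : ℝ))
      have hAk : |A (k + d)| = |A k| * Z / (X * Y) := by
        rw [eq_div_iff (by positivity)]; exact hk'
      rw [hAk, pow_add]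
      field_simp
  refine ⟨hsum, (hsum.mul_right (τ ^ ((r : ℝ) * lam))).congr fun k => ?_⟩
  rw [abs_mul, abs_of_pos (Real.rpow_pos_of_pos hτ0 _), hf, mul_assoc, ← Real.rpow_add hτ0]
  congr 2
  ring
end
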